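/- (Ershov–He) Let n ≥ 4 and let Γ be a finite index subgroup of Aut(F_n) that contains [IA_n, IA_n], the commutator subgroup of the group of IA-automorphisms. Then Γ has finite abelianization: the quotient Γ/[Γ,Γ] is a finite group. In particular, every group homomorphism Γ → (ℝ,+) is trivial. -/

import Mathlib

noncomputable section

/-- The free group of rank `n`. -/
abbrev FreeGrp (n : ℕ) : Type := FreeGroup (Fin n)

/-- The automorphism group `Aut(Fₙ)`. -/
abbrev AutF (n : ℕ) : Type := MulAut (FreeGrp n)

/-- The subgroup `IAₙ ≤ Aut(Fₙ)` of automorphisms acting trivially on the abelianization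
`Fₙ^{ab} ≅ ℤⁿ`, i.e. the kernel of the natural map `Aut(Fₙ) → Aut(ℤⁿ)`. -/
def IA (n : ℕ) : Subgroup (AutF n) where
  carrier := {e | ∀ x : FreeGrp n, Abelianization.of (e x) = Abelianization.of x}
  one_mem' := fun _ => rfl
  mul_mem' := by
    intro a b ha hb x
    have h : (a * b) x = a (b x) := rfl
    rw [h, ha (b x), hb x]
  inv_mem' := by
    intro a ha x
    have h := ha (a⁻¹ x)
    have h' : a (a⁻¹ x) = x := a.apply_symm_apply x
    rw [h'] at h
    exact h.symm


set_option linter.all false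
set_option linter.unusedSimpArgs false

namespace EH

variable {n : ℕ}

theorem aut_ext {a b : AutF n} (h : ∀ k, a (FreeGroup.of k) = b (FreeGroup.of k)) : a = b := by
  have : a.toMonoidHom = b.toMonoidHom := FreeGroup.ext_hom _ _ h
  ext y
  exact DFunLike.congr_fun this y

def Rh (i j : Fin n) (e : ℤ) : FreeGrp n →* FreeGrp n :=
  FreeGroup.lift (fun k => if k = i then FreeGroup.of i * FreeGroup.of j ^ e else FreeGroup.of k)

theorem Rh_comp (i j : Fin n) (h : i ≠ j) (e : ℤ) :
    (Rh i j e).comp (Rh i j (-e)) = MonoidHom.id _ := by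
  apply FreeGroup.ext_hom
  intro k
  by_cases hk : k = i
  · subst hk; simp [Rh, h.symm]
  · simp [Rh, hk]

/-- right transvection -/
def R (i j : Fin n) : AutF n :=
  if h : i = j then 1 else
    MonoidHom.toMulEquiv (Rh i j 1) (Rh i j (-1)) (by simpa using Rh_comp i j h (-1))
      (by simpa using Rh_comp i j h 1)

@[simp] theorem R_apply {i j : Fin n} (h : i ≠ j) (k : Fin n) :
    R i j (FreeGroup.of k) = if k = i then FreeGroup.of i * FreeGroup.of j else FreeGroup.of k := by
  simp [R, h, Rh]

theorem R_inv_apply {i j : Fin n} (h : i ≠ j) (k : Fin n) :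
    (R i j)⁻¹ (FreeGroup.of k) =
      if k = i then FreeGroup.of i * (FreeGroup.of j)⁻¹ else FreeGroup.of k := by
  have : (R i j)⁻¹ (FreeGroup.of k) = Rh i j (-1) (FreeGroup.of k) := by
    simp only [R, h, dite_false]; rfl
  rw [this]; simp [Rh]

@[simp] theorem R_symm_apply {i j : Fin n} (h : i ≠ j) (k : Fin n) :
    MulEquiv.symm (R i j) (FreeGroup.of k) =
      if k = i then FreeGroup.of i * (FreeGroup.of j)⁻¹ else FreeGroup.of k :=
  R_inv_apply h k

def iotah (i : Fin n) : FreeGrp n →* FreeGrp n :=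
  FreeGroup.lift (fun k => if k = i then (FreeGroup.of i)⁻¹ else FreeGroup.of k)

theorem iotah_comp (i : Fin n) : (iotah i).comp (iotah i) = MonoidHom.id _ := by
  apply FreeGroup.ext_hom
  intro k
  by_cases hk : k = i
  · subst hk; simp [iotah]
  · simp [iotah, hk]

/-- inversion of one generator -/
def iota (i : Fin n) : AutF n :=
  MonoidHom.toMulEquiv (iotah i) (iotah i) (iotah_comp i) (iotah_comp i)

@[simp] theorem iota_apply (i k : Fin n) :
    iota i (FreeGroup.of k) = if k = i then (FreeGroup.of i)⁻¹ else FreeGroup.of k := by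
  simp [iota, iotah]

theorem iota_inv (i : Fin n) : (iota i)⁻¹ = iota i := rfl

/-- permutation automorphism -/
def pm (s : Equiv.Perm (Fin n)) : AutF n := FreeGroup.freeGroupCongr s

@[simp] theorem pm_apply (s : Equiv.Perm (Fin n)) (k : Fin n) :
    pm s (FreeGroup.of k) = FreeGroup.of (s k) := by
  simp [pm]

theorem pm_inv (s : Equiv.Perm (Fin n)) : (pm s)⁻¹ = pm s⁻¹ := by
  rw [inv_eq_iff_mul_eq_one]
  apply aut_ext; intro k; simp [pm_apply]

/-- left transvection -/
def L (i j : Fin n) : AutF n := iota i * (R i j)⁻¹ * iota i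

@[simp] theorem L_apply {i j : Fin n} (h : i ≠ j) (k : Fin n) :
    L i j (FreeGroup.of k) = if k = i then FreeGroup.of j * FreeGroup.of i else FreeGroup.of k := by
  by_cases hk : k = i
  · subst hk; simp [L, iota_apply, R_symm_apply h, h.symm]
  · simp [L, iota_apply, R_symm_apply h, hk]

theorem L_inv_apply {i j : Fin n} (h : i ≠ j) (k : Fin n) :
    (L i j)⁻¹ (FreeGroup.of k) =
      if k = i then (FreeGroup.of j)⁻¹ * FreeGroup.of i else FreeGroup.of k := by
  have : (L i j)⁻¹ = iota i * (R i j) * iota i := by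
    simp [L, mul_inv_rev, iota_inv, mul_assoc]
  rw [this]
  by_cases hk : k = i
  · subst hk; simp [iota_apply, R_apply h, h.symm]
  · simp [iota_apply, R_apply h, hk]

@[simp] theorem L_symm_apply {i j : Fin n} (h : i ≠ j) (k : Fin n) :
    MulEquiv.symm (L i j) (FreeGroup.of k) =
      if k = i then (FreeGroup.of j)⁻¹ * FreeGroup.of i else FreeGroup.of k :=
  L_inv_apply h k

/-- partial conjugation -/
def C (i j : Fin n) : AutF n := (L i j)⁻¹ * R i j

@[simp] theorem C_apply {i j : Fin n} (h : i ≠ j) (k : Fin n) :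
    C i j (FreeGroup.of k) =
      if k = i then (FreeGroup.of j)⁻¹ * FreeGroup.of i * FreeGroup.of j else FreeGroup.of k := by
  by_cases hk : k = i
  · subst hk; simp [C, L_symm_apply h, R_apply h, h.symm, mul_assoc]
  · simp [C, L_symm_apply h, R_apply h, hk]

theorem C_inv_apply {i j : Fin n} (h : i ≠ j) (k : Fin n) :
    (C i j)⁻¹ (FreeGroup.of k) =
      if k = i then FreeGroup.of j * FreeGroup.of i * (FreeGroup.of j)⁻¹ else FreeGroup.of k := by
  by_cases hk : k = i
  · subst hk; simp [C, L_apply h, R_symm_apply h, h.symm, mul_assoc]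
  · simp [C, L_apply h, R_symm_apply h, hk]

@[simp] theorem C_symm_apply {i j : Fin n} (h : i ≠ j) (k : Fin n) :
    MulEquiv.symm (C i j) (FreeGroup.of k) =
      if k = i then FreeGroup.of j * FreeGroup.of i * (FreeGroup.of j)⁻¹ else FreeGroup.of k :=
  C_inv_apply h k

/-- the Magnus generator `x_i ↦ x_i [x_j, x_k]` -/
def M (i j k : Fin n) : AutF n := R i j * R i k * (R i j)⁻¹ * (R i k)⁻¹

@[simp] theorem M_apply {i j k : Fin n} (h : i ≠ j) (h' : i ≠ k) (l : Fin n) :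
    M i j k (FreeGroup.of l) =
      if l = i then FreeGroup.of i * FreeGroup.of j * FreeGroup.of k * (FreeGroup.of j)⁻¹ *
        (FreeGroup.of k)⁻¹ else FreeGroup.of l := by
  by_cases hk : l = i
  · subst hk; simp [M, R_apply h, R_apply h', R_symm_apply h, R_symm_apply h', h.symm, h'.symm, mul_assoc]
  · simp [M, R_apply h, R_apply h', R_symm_apply h, R_symm_apply h', hk]

theorem M_inv (i j k : Fin n) : (M i j k)⁻¹ = M i k j := by
  simp [M, mul_assoc]

@[simp] theorem M_symm_apply {i j k : Fin n} (h : i ≠ j) (h' : i ≠ k) (l : Fin n) :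
    MulEquiv.symm (M i j k) (FreeGroup.of l) =
      if l = i then FreeGroup.of i * FreeGroup.of k * FreeGroup.of j * (FreeGroup.of k)⁻¹ *
        (FreeGroup.of j)⁻¹ else FreeGroup.of l := by
  rw [← M_apply h' h, ← M_inv]; rfl

end EH

set_option linter.all false
set_option linter.unusedSimpArgs false
namespace EH

variable {n : ℕ}

theorem c1 {a b i j : Fin n} (hab : a ≠ b) (hia : i ≠ a) (hib : i ≠ b) (hja : j ≠ a) (hij : i ≠ j) :
    R a b * C i j = C i j * R a b := by
  have sab := hab.symm; have sia := hia.symm; have sib := hib.symm; have sja := hja.symm; have sij := hij.symm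
  apply aut_ext; intro l
  by_cases h0 : l = a
  · subst h0; simp [mul_assoc, *]
  by_cases h1 : l = b
  · subst h1; simp [mul_assoc, *]
  by_cases h2 : l = i
  · subst h2; simp [mul_assoc, *]
  by_cases h3 : l = j
  · subst h3; simp [mul_assoc, *]
  simp [mul_assoc, *]

theorem c1b {a b i : Fin n} (hab : a ≠ b) (hia : i ≠ a) (hib : i ≠ b) :
    R a b * C i b = C i b * R a b := by
  have sab := hab.symm; have sia := hia.symm; have sib := hib.symm
  apply aut_ext; intro l
  by_cases h0 : l = a
  · subst h0; simp [mul_assoc, *]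
  by_cases h1 : l = b
  · subst h1; simp [mul_assoc, *]
  by_cases h2 : l = i
  · subst h2; simp [mul_assoc, *]
  simp [mul_assoc, *]

theorem c2 {a b i : Fin n} (hab : a ≠ b) (hia : i ≠ a) (hib : i ≠ b) :
    R a b * C i a = C i a * C i b * R a b := by
  have sab := hab.symm; have sia := hia.symm; have sib := hib.symm
  apply aut_ext; intro l
  by_cases h0 : l = a
  · subst h0; simp [mul_assoc, *]
  by_cases h1 : l = b
  · subst h1; simp [mul_assoc, *]
  by_cases h2 : l = i
  · subst h2; simp [mul_assoc, *]
  simp [mul_assoc, *]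

theorem c3 {a b : Fin n} (hab : a ≠ b) :
    R a b * C a b = C a b * R a b := by
  have sab := hab.symm
  apply aut_ext; intro l
  by_cases h0 : l = a
  · subst h0; simp [mul_assoc, *]
  by_cases h1 : l = b
  · subst h1; simp [mul_assoc, *]
  simp [mul_assoc, *]

theorem c4 {a b j : Fin n} (hab : a ≠ b) (hja : j ≠ a) (hjb : j ≠ b) :
    R a b * C a j = M a b j * C a j * R a b := by
  have sab := hab.symm; have sja := hja.symm; have sjb := hjb.symm
  apply aut_ext; intro l
  by_cases h0 : l = a
  · subst h0; simp [mul_assoc, *]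
  by_cases h1 : l = b
  · subst h1; simp [mul_assoc, *]
  by_cases h2 : l = j
  · subst h2; simp [mul_assoc, *]
  simp [mul_assoc, *]

theorem c5 {a b : Fin n} (hab : a ≠ b) :
    R a b * C b a = C a b * C b a * R a b := by
  have sab := hab.symm
  apply aut_ext; intro l
  by_cases h0 : l = a
  · subst h0; simp [mul_assoc, *]
  by_cases h1 : l = b
  · subst h1; simp [mul_assoc, *]
  simp [mul_assoc, *]

theorem c6 {a b j : Fin n} (hab : a ≠ b) (hja : j ≠ a) (hjb : j ≠ b) :
    R a b * C b j = (C a j)⁻¹ * M a j b * C a j * C b j * R a b := by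
  have sab := hab.symm; have sja := hja.symm; have sjb := hjb.symm
  apply aut_ext; intro l
  by_cases h0 : l = a
  · subst h0; simp [mul_assoc, *]
  by_cases h1 : l = b
  · subst h1; simp [mul_assoc, *]
  by_cases h2 : l = j
  · subst h2; simp [mul_assoc, *]
  simp [mul_assoc, *]

theorem m1 {a b i j k : Fin n} (hab : a ≠ b) (hia : i ≠ a) (hib : i ≠ b) (hja : j ≠ a) (hka : k ≠ a) (hij : i ≠ j) (hik : i ≠ k) :
    R a b * M i j k = M i j k * R a b := by
  have sab := hab.symm; have sia := hia.symm; have sib := hib.symm; have sja := hja.symm; have ska := hka.symm; have sij := hij.symm; have sik := hik.symm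
  apply aut_ext; intro l
  by_cases h0 : l = a
  · subst h0; simp [mul_assoc, *]
  by_cases h1 : l = b
  · subst h1; simp [mul_assoc, *]
  by_cases h2 : l = i
  · subst h2; simp [mul_assoc, *]
  by_cases h3 : l = j
  · subst h3; simp [mul_assoc, *]
  by_cases h4 : l = k
  · subst h4; simp [mul_assoc, *]
  simp [mul_assoc, *]

theorem m2 {a b i k : Fin n} (hab : a ≠ b) (hia : i ≠ a) (hib : i ≠ b) (hka : k ≠ a) (hik : i ≠ k) :
    R a b * M i a k = C i a * M i b k * (C i a)⁻¹ * M i a k * R a b := by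
  have sab := hab.symm; have sia := hia.symm; have sib := hib.symm; have ska := hka.symm; have sik := hik.symm
  apply aut_ext; intro l
  by_cases h0 : l = a
  · subst h0; simp [mul_assoc, *]
  by_cases h1 : l = b
  · subst h1; simp [mul_assoc, *]
  by_cases h2 : l = i
  · subst h2; simp [mul_assoc, *]
  by_cases h3 : l = k
  · subst h3; simp [mul_assoc, *]
  simp [mul_assoc, *]

theorem m3 {a b i : Fin n} (hab : a ≠ b) (hia : i ≠ a) (hib : i ≠ b) :
    R a b * M i a b = M i a b * R a b := by
  have sab := hab.symm; have sia := hia.symm; have sib := hib.symm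
  apply aut_ext; intro l
  by_cases h0 : l = a
  · subst h0; simp [mul_assoc, *]
  by_cases h1 : l = b
  · subst h1; simp [mul_assoc, *]
  by_cases h2 : l = i
  · subst h2; simp [mul_assoc, *]
  simp [mul_assoc, *]

theorem m4 {a b j k : Fin n} (hab : a ≠ b) (hja : j ≠ a) (hka : k ≠ a) :
    R a b * M a j k = C a b * M a j k * (C a b)⁻¹ * R a b := by
  have sab := hab.symm; have sja := hja.symm; have ska := hka.symm
  apply aut_ext; intro l
  by_cases h0 : l = a
  · subst h0; simp [mul_assoc, *]
  by_cases h1 : l = b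
  · subst h1; simp [mul_assoc, *]
  by_cases h2 : l = j
  · subst h2; simp [mul_assoc, *]
  by_cases h3 : l = k
  · subst h3; simp [mul_assoc, *]
  simp [mul_assoc, *]

theorem m5 {a b j k : Fin n} (hab : a ≠ b) (hja : j ≠ a) (hka : k ≠ a) (hjb : j ≠ b) (hkb : k ≠ b) :
    R a b * M b j k = C a b * M a k j * (C a b)⁻¹ * M b j k * R a b := by
  have sab := hab.symm; have sja := hja.symm; have ska := hka.symm; have sjb := hjb.symm; have skb := hkb.symm
  apply aut_ext; intro l
  by_cases h0 : l = a
  · subst h0; simp [mul_assoc, *]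
  by_cases h1 : l = b
  · subst h1; simp [mul_assoc, *]
  by_cases h2 : l = j
  · subst h2; simp [mul_assoc, *]
  by_cases h3 : l = k
  · subst h3; simp [mul_assoc, *]
  simp [mul_assoc, *]

theorem m6 {a b k : Fin n} (hab : a ≠ b) (hka : k ≠ a) (hkb : k ≠ b) :
    R a b * M b k a = C a b * C a k * M b k a * C b a * (C b k)⁻¹ * (C a k)⁻¹ * M a b k * C a k * (C b a)⁻¹ * (C a b)⁻¹ * R a b := by
  have sab := hab.symm; have ska := hka.symm; have skb := hkb.symm
  apply aut_ext; intro l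
  by_cases h0 : l = a
  · subst h0; simp [mul_assoc, *]
  by_cases h1 : l = b
  · subst h1; simp [mul_assoc, *]
  by_cases h2 : l = k
  · subst h2; simp [mul_assoc, *]
  simp [mul_assoc, *]

theorem i1 {a i j : Fin n} (hij : i ≠ j) (hja : j ≠ a) :
    iota a * C i j = C i j * iota a := by
  have sij := hij.symm; have sja := hja.symm
  apply aut_ext; intro l
  by_cases h0 : l = a
  · subst h0
    by_cases h1 : l = i
    · subst h1; simp [mul_assoc, *]
    · simp [mul_assoc, *]
  by_cases h1 : l = i
  · subst h1; simp [mul_assoc, *]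
  by_cases h2 : l = j
  · subst h2; simp [mul_assoc, *]
  simp [mul_assoc, *]

theorem i2 {a i : Fin n} (hia : i ≠ a) :
    iota a * C i a = (C i a)⁻¹ * iota a := by
  have sia := hia.symm
  apply aut_ext; intro l
  by_cases h0 : l = a
  · subst h0; simp [mul_assoc, *]
  by_cases h1 : l = i
  · subst h1; simp [mul_assoc, *]
  simp [mul_assoc, *]

theorem i3 {a i j k : Fin n} (hia : i ≠ a) (hja : j ≠ a) (hka : k ≠ a) (hij : i ≠ j) (hik : i ≠ k) :
    iota a * M i j k = M i j k * iota a := by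
  have sia := hia.symm; have sja := hja.symm; have ska := hka.symm; have sij := hij.symm; have sik := hik.symm
  apply aut_ext; intro l
  by_cases h0 : l = a
  · subst h0; simp [mul_assoc, *]
  by_cases h1 : l = i
  · subst h1; simp [mul_assoc, *]
  by_cases h2 : l = j
  · subst h2; simp [mul_assoc, *]
  by_cases h3 : l = k
  · subst h3; simp [mul_assoc, *]
  simp [mul_assoc, *]

theorem i4 {a i k : Fin n} (hia : i ≠ a) (hka : k ≠ a) (hik : i ≠ k) :
    iota a * M i a k = (C i a)⁻¹ * M i k a * C i a * iota a := by
  have sia := hia.symm; have ska := hka.symm; have sik := hik.symm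
  apply aut_ext; intro l
  by_cases h0 : l = a
  · subst h0; simp [mul_assoc, *]
  by_cases h1 : l = i
  · subst h1; simp [mul_assoc, *]
  by_cases h2 : l = k
  · subst h2; simp [mul_assoc, *]
  simp [mul_assoc, *]

theorem i5 {a j k : Fin n} (hja : j ≠ a) (hka : k ≠ a) :
    iota a * M a j k = C a j * C a k * (C a j)⁻¹ * (C a k)⁻¹ * M a k j * iota a := by
  have sja := hja.symm; have ska := hka.symm
  apply aut_ext; intro l
  by_cases h0 : l = a
  · subst h0; simp [mul_assoc, *]
  by_cases h1 : l = j
  · subst h1; simp [mul_assoc, *]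
  by_cases h2 : l = k
  · subst h2; simp [mul_assoc, *]
  simp [mul_assoc, *]

theorem p1 (s : Equiv.Perm (Fin n)) {i j : Fin n} (hij : i ≠ j) :
    pm s * C i j = C (s i) (s j) * pm s := by
  have h : s i ≠ s j := fun h => hij (s.injective h)
  apply aut_ext; intro l
  by_cases h0 : l = i <;> simp [*]

theorem p2 (s : Equiv.Perm (Fin n)) {i j k : Fin n} (hij : i ≠ j) (hik : i ≠ k) :
    pm s * M i j k = M (s i) (s j) (s k) * pm s := by
  have h : s i ≠ s j := fun h => hij (s.injective h)
  have h' : s i ≠ s k := fun h => hik (s.injective h)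
  apply aut_ext; intro l
  by_cases h0 : l = i <;> simp [*]

theorem pR (s : Equiv.Perm (Fin n)) {i j : Fin n} (hij : i ≠ j) :
    pm s * R i j = R (s i) (s j) * pm s := by
  have h : s i ≠ s j := fun h => hij (s.injective h)
  apply aut_ext; intro l
  by_cases h0 : l = i <;> simp [*]

theorem Rinv {a b : Fin n} (hab : a ≠ b) : (R a b)⁻¹ = iota b * R a b * iota b := by
  have := hab.symm
  apply aut_ext; intro l
  by_cases h0 : l = a
  · subst h0; simp [*]
  by_cases h1 : l = b
  · subst h1; simp [*]
  simp [*]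

/-- generators of `Aut(F_n)` -/
def NG (n : ℕ) : Set (AutF n) :=
  {g | (∃ s, g = pm s) ∨ (∃ i, g = iota i) ∨ ∃ i j, i ≠ j ∧ g = R i j}

/-- Magnus generators -/
def MG (n : ℕ) : Set (AutF n) :=
  {g | (∃ i j, i ≠ j ∧ g = C i j) ∨ ∃ i j k, i ≠ j ∧ i ≠ k ∧ j ≠ k ∧ g = M i j k}

def I' (n : ℕ) : Subgroup (AutF n) := Subgroup.closure (MG n)

theorem C_mem {i j : Fin n} (h : i ≠ j) : C i j ∈ I' n :=
  Subgroup.subset_closure (Or.inl ⟨i, j, h, rfl⟩)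

theorem M_mem {i j k : Fin n} (h : i ≠ j) (h' : i ≠ k) : M i j k ∈ I' n := by
  by_cases hjk : j = k
  · subst hjk
    have : M i j j = 1 := by simp [M]
    rw [this]; exact one_mem _
  · exact Subgroup.subset_closure (Or.inr ⟨i, j, k, h, h', hjk, rfl⟩)

theorem conj_of_eq {g u v : AutF n} (h : g * u = v * g) (hv : v ∈ I' n) : g * u * g⁻¹ ∈ I' n := by
  rw [h, mul_inv_cancel_right]; exact hv

theorem conj_R_C {a b i j : Fin n} (hab : a ≠ b) (hij : i ≠ j) : R a b * C i j * (R a b)⁻¹ ∈ I' n := by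
  by_cases hia : i = a
  · subst hia
    by_cases hjb : j = b
    · subst hjb; exact conj_of_eq (c3 hab) (C_mem hab)
    · exact conj_of_eq (c4 hab hij.symm hjb) (mul_mem (M_mem hab hij) (C_mem hij))
  by_cases hib : i = b
  · subst hib
    by_cases hja : j = a
    · subst hja; exact conj_of_eq (c5 hab) (mul_mem (C_mem hab) (C_mem hij))
    · have hja' : a ≠ j := fun h => hja h.symm
      exact conj_of_eq (c6 hab hja hij.symm) (mul_mem (mul_mem (mul_mem (inv_mem (C_mem hja'))
        (M_mem hja' hab)) (C_mem hja')) (C_mem hij))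
  by_cases hja : j = a
  · subst hja
    exact conj_of_eq (c2 hab hia hib) (mul_mem (C_mem hia) (C_mem hib))
  · exact conj_of_eq (c1 hab hia hib hja hij) (C_mem hij)

theorem conj_R_M_symm {a b i j k : Fin n} (h : R a b * M i j k * (R a b)⁻¹ ∈ I' n) :
    R a b * M i k j * (R a b)⁻¹ ∈ I' n := by
  have := inv_mem h
  simpa [← M_inv i j k, mul_assoc] using this

theorem conj_R_M {a b i j k : Fin n} (hab : a ≠ b) (hij : i ≠ j) (hik : i ≠ k) (hjk : j ≠ k) :
    R a b * M i j k * (R a b)⁻¹ ∈ I' n := by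
  by_cases hia : i = a
  · subst hia
    exact conj_of_eq (m4 hab hij.symm hik.symm) (mul_mem (mul_mem (C_mem hab) (M_mem hij hik))
      (inv_mem (C_mem hab)))
  by_cases hib : i = b
  · subst hib
    have key : ∀ {k}, k ≠ a → i ≠ k → R a i * M i k a * (R a i)⁻¹ ∈ I' n := by
      intro k hka hik
      exact conj_of_eq (m6 hab hka hik.symm)
        (mul_mem (mul_mem (mul_mem (mul_mem (mul_mem (mul_mem (mul_mem (mul_mem (mul_mem
          (C_mem hab) (C_mem hka.symm)) (M_mem hik hab.symm)) (C_mem hab.symm))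
          (inv_mem (C_mem hik))) (inv_mem (C_mem hka.symm))) (M_mem hab hka.symm)) (C_mem hka.symm))
          (inv_mem (C_mem hab.symm))) (inv_mem (C_mem hab)))
    by_cases hka : k = a
    · subst hka
      exact key hjk hij
    by_cases hja : j = a
    · subst hja
      exact conj_R_M_symm (key hka hik)
    exact conj_of_eq (m5 hab hja hka hij.symm hik.symm) (mul_mem (mul_mem (mul_mem (C_mem hab)
      (M_mem (Ne.symm hka) (Ne.symm hja))) (inv_mem (C_mem hab))) (M_mem hij hik))
  have key : ∀ {k}, k ≠ a → i ≠ k → R a b * M i a k * (R a b)⁻¹ ∈ I' n := by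
    intro k hka hik
    exact conj_of_eq (m2 hab hia hib hka hik) (mul_mem (mul_mem (mul_mem (C_mem hia)
      (M_mem hib hik)) (inv_mem (C_mem hia))) (M_mem hia hik))
  by_cases hja : j = a
  · subst hja; exact key hjk.symm hik
  by_cases hka : k = a
  · subst hka; exact conj_R_M_symm (key hjk hij)
  exact conj_of_eq (m1 hab hia hib hja hka hij hik) (M_mem hij hik)

theorem conj_iota_C {a i j : Fin n} (hij : i ≠ j) : iota a * C i j * (iota a)⁻¹ ∈ I' n := by
  by_cases hja : j = a
  · subst hja; exact conj_of_eq (i2 hij) (inv_mem (C_mem hij))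
  · exact conj_of_eq (i1 hij hja) (C_mem hij)

theorem conj_iota_M {a i j k : Fin n} (hij : i ≠ j) (hik : i ≠ k) (hjk : j ≠ k) :
    iota a * M i j k * (iota a)⁻¹ ∈ I' n := by
  by_cases hia : i = a
  · subst hia
    exact conj_of_eq (i5 hij.symm hik.symm) (mul_mem (mul_mem (mul_mem (mul_mem (C_mem hij)
      (C_mem hik)) (inv_mem (C_mem hij))) (inv_mem (C_mem hik))) (M_mem hik hij))
  have key : ∀ {k}, k ≠ a → i ≠ k → iota a * M i a k * (iota a)⁻¹ ∈ I' n := by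
    intro k hka hik
    exact conj_of_eq (i4 hia hka hik) (mul_mem (mul_mem (inv_mem (C_mem hia)) (M_mem hik hia)) (C_mem hia))
  by_cases hja : j = a
  · subst hja; exact key hjk.symm hik
  by_cases hka : k = a
  · subst hka
    have := inv_mem (key hjk hij)
    simpa [← M_inv i j k, mul_assoc] using this
  exact conj_of_eq (i3 hia hja hka hij hik) (M_mem hij hik)

theorem conj_closure {g : AutF n} (h : ∀ u ∈ MG n, g * u * g⁻¹ ∈ I' n) :
    ∀ u ∈ I' n, g * u * g⁻¹ ∈ I' n := by
  intro u hu
  induction hu using Subgroup.closure_induction with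
  | mem x hx => exact h x hx
  | one => simp
  | mul x y _ _ hx hy =>
    have := mul_mem hx hy
    simpa [mul_assoc] using this
  | inv x _ hx =>
    have := inv_mem hx
    simpa [mul_assoc] using this

theorem NG_conj {g : AutF n} (hg : g ∈ NG n) : ∀ u ∈ I' n, g * u * g⁻¹ ∈ I' n := by
  apply conj_closure
  rintro u (⟨i, j, hij, rfl⟩ | ⟨i, j, k, hij, hik, hjk, rfl⟩)
  · rcases hg with ⟨s, rfl⟩ | ⟨a, rfl⟩ | ⟨a, b, hab, rfl⟩
    · exact conj_of_eq (p1 s hij) (C_mem fun h => hij (s.injective h))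
    · exact conj_iota_C hij
    · exact conj_R_C hab hij
  · rcases hg with ⟨s, rfl⟩ | ⟨a, rfl⟩ | ⟨a, b, hab, rfl⟩
    · exact conj_of_eq (p2 s hij hik) (M_mem (fun h => hij (s.injective h)) fun h => hik (s.injective h))
    · exact conj_iota_M hij hik hjk
    · exact conj_R_M hab hij hik hjk

theorem NG_conj_inv {g : AutF n} (hg : g ∈ NG n) : ∀ u ∈ I' n, g⁻¹ * u * g ∈ I' n := by
  intro u hu
  rcases hg with ⟨s, rfl⟩ | ⟨a, rfl⟩ | ⟨a, b, hab, rfl⟩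
  · have := NG_conj (Or.inl ⟨s⁻¹, rfl⟩) u hu
    rw [← pm_inv, inv_inv] at this
    exact this
  · have := NG_conj (Or.inr (Or.inl ⟨a, rfl⟩)) u hu
    rw [iota_inv] at this ⊢
    exact this
  · have h1 := NG_conj (Or.inr (Or.inl ⟨b, rfl⟩)) u hu
    have h2 := NG_conj (Or.inr (Or.inr ⟨a, b, hab, rfl⟩)) _ h1
    have h3 := NG_conj (Or.inr (Or.inl ⟨b, rfl⟩)) _ h2
    have e : (R a b)⁻¹ * u * R a b = iota b * (R a b * (iota b * u * (iota b)⁻¹) * (R a b)⁻¹) * (iota b)⁻¹ := by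
      have : R a b = (iota b * R a b * iota b)⁻¹ := by rw [← Rinv hab, inv_inv]
      conv_lhs => rw [this, inv_inv]
      simp only [mul_inv_rev, iota_inv, mul_assoc]
    rw [e]; exact h3

theorem closure_conj {g : AutF n} (hg : g ∈ Subgroup.closure (NG n)) :
    (∀ u ∈ I' n, g * u * g⁻¹ ∈ I' n) ∧ (∀ u ∈ I' n, g⁻¹ * u * g ∈ I' n) := by
  induction hg using Subgroup.closure_induction with
  | mem x hx => exact ⟨NG_conj hx, NG_conj_inv hx⟩
  | one => simp
  | mul x y _ _ hx hy =>
    refine ⟨fun u hu => ?_, fun u hu => ?_⟩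
    · have := hx.1 _ (hy.1 u hu); simpa [mul_assoc] using this
    · have := hy.2 _ (hx.2 u hu); simpa [mul_assoc] using this
  | inv x _ hx => exact ⟨by simpa using hx.2, by simpa using hx.1⟩

theorem R_mem_NG {i j : Fin n} (h : i ≠ j) : R i j ∈ Subgroup.closure (NG n) :=
  Subgroup.subset_closure (Or.inr (Or.inr ⟨i, j, h, rfl⟩))

theorem I'_le_NG : I' n ≤ Subgroup.closure (NG n) := by
  have hR : ∀ {i j : Fin n}, i ≠ j → R i j ∈ Subgroup.closure (NG n) := R_mem_NG
  have hi : ∀ {i : Fin n}, iota i ∈ Subgroup.closure (NG n) := fun {i} =>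
    Subgroup.subset_closure (Or.inr (Or.inl ⟨i, rfl⟩))
  rw [I', Subgroup.closure_le]
  rintro u (⟨i, j, hij, rfl⟩ | ⟨i, j, k, hij, hik, hjk, rfl⟩)
  · exact mul_mem (inv_mem (mul_mem (mul_mem hi (inv_mem (hR hij))) hi)) (hR hij)
  · exact mul_mem (mul_mem (mul_mem (hR hij) (hR hik)) (inv_mem (hR hij))) (inv_mem (hR hik))

theorem IA_of_gen {a : AutF n} (h : ∀ k, Abelianization.of (a (FreeGroup.of k)) =
    Abelianization.of (FreeGroup.of k)) : a ∈ IA n := by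
  have : Abelianization.of.comp a.toMonoidHom = Abelianization.of := FreeGroup.ext_hom _ _ h
  intro x
  exact DFunLike.congr_fun this x

theorem I'_le_IA : I' n ≤ IA n := by
  rw [I', Subgroup.closure_le]
  rintro u (⟨i, j, hij, rfl⟩ | ⟨i, j, k, hij, hik, hjk, rfl⟩)
  · apply IA_of_gen; intro k
    by_cases h : k = i
    · subst h; simp [hij, mul_comm]
    · simp [h, hij]
  · apply IA_of_gen; intro l
    by_cases h : l = i
    · subst h
      simp only [M_apply hij hik, if_true, map_mul, map_inv]
      simp [mul_comm, mul_assoc]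
    · simp [h, hij, hik]

end EH

set_option linter.all false
set_option linter.unusedSimpArgs false
namespace EH
section words
variable {α : Type} [DecidableEq α]
open FreeGroup

theorem lcp : ∀ x y : List (α × Bool), ∃ c a b, x = c ++ a ∧ y = c ++ b ∧
    ∀ p ∈ a.head?, ∀ q ∈ b.head?, p ≠ q
  | [], y => ⟨[], [], y, rfl, rfl, by simp⟩
  | x, [] => ⟨[], x, [], rfl, rfl, by simp⟩
  | p :: x, q :: y => by
    by_cases h : p = q
    · obtain ⟨c, a, b, h1, h2, h3⟩ := lcp x y
      exact ⟨p :: c, a, b, by simp [h1], by simp [h, h2], h3⟩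
    · exact ⟨[], p :: x, q :: y, rfl, rfl, by simpa using h⟩

theorem getLast_invRev (a : List (α × Bool)) :
    (invRev a).getLast? = a.head?.map fun p => (p.1, !p.2) := by
  simp [invRev]

theorem word_split {u v : FreeGroup α} {c a b : List (α × Bool)}
    (hu : u.toWord = c ++ a) (hv : v.toWord = c ++ b)
    (h : ∀ p ∈ a.head?, ∀ q ∈ b.head?, p ≠ q) : (u⁻¹ * v).toWord = invRev a ++ b := by
  have e : u⁻¹ * v = mk (invRev a ++ b) := by
    rw [← mk_toWord (x := u), ← mk_toWord (x := v), hu, hv, ← mul_mk, ← mul_mk, ← mul_mk, ← inv_mk]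
    group
  have ra : IsReduced (invRev a) := by
    have := isReduced_toWord (x := u⁻¹)
    rw [toWord_inv, hu, invRev_append] at this
    exact this.infix (List.prefix_append _ _).isInfix
  have rb : IsReduced b := by
    have := isReduced_toWord (x := v)
    rw [hv] at this
    exact this.infix (List.suffix_append _ _).isInfix
  rw [e, toWord_mk]
  apply IsReduced.reduce_eq
  unfold FreeGroup.IsReduced at *
  rw [List.isChain_append]
  refine ⟨ra, rb, ?_⟩
  intro p hp q hq hpq
  rw [getLast_invRev] at hp
  obtain ⟨p', hp', rfl⟩ := Option.mem_map.1 hp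
  have := h _ hp' _ hq
  rcases p' with ⟨p1, p2⟩; rcases q with ⟨q1, q2⟩
  simp at *
  subst hpq
  have := this rfl
  cases p2 <;> cases q2 <;> simp_all

def cp (u v : FreeGroup α) : ℕ := (u.norm + v.norm - (u⁻¹ * v).norm) / 2

theorem cp_spec (u v : FreeGroup α) : (u⁻¹ * v).norm + 2 * cp u v = u.norm + v.norm ∧
    ∀ k, k ≤ cp u v ↔ k ≤ u.norm ∧ k ≤ v.norm ∧ u.toWord.take k = v.toWord.take k := by
  obtain ⟨c, a, b, h1, h2, h3⟩ := lcp u.toWord v.toWord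
  have h4 := word_split h1 h2 h3
  have n1 : u.norm = c.length + a.length := by simp [FreeGroup.norm, h1]
  have n2 : v.norm = c.length + b.length := by simp [FreeGroup.norm, h2]
  have n3 : (u⁻¹ * v).norm = a.length + b.length := by simp [FreeGroup.norm, h4]
  have hc : cp u v = c.length := by unfold cp; omega
  refine ⟨by omega, fun k => ?_⟩
  rw [hc, n1, n2, h1, h2]
  constructor
  · intro hk
    refine ⟨by omega, by omega, ?_⟩
    rw [List.take_append_of_le_length hk, List.take_append_of_le_length hk]
  · rintro ⟨k1, k2, k3⟩
    by_contra! hk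
    rcases a with _ | ⟨p, a⟩
    · simp at k1; omega
    rcases b with _ | ⟨q, b⟩
    · simp at k2; omega
    have := congrArg (fun l => l[c.length]?) k3
    simp [List.getElem?_take, hk] at this
    exact h3 p (by simp) q (by simp) this

theorem cp_len (u v : FreeGroup α) : (u⁻¹ * v).norm + 2 * cp u v = u.norm + v.norm := (cp_spec u v).1
theorem cp_le_left (u v : FreeGroup α) : cp u v ≤ u.norm := (((cp_spec u v).2 _).1 le_rfl).1
theorem cp_le_right (u v : FreeGroup α) : cp u v ≤ v.norm := (((cp_spec u v).2 _).1 le_rfl).2.1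
theorem cp_take {u v : FreeGroup α} {k : ℕ} (h : k ≤ cp u v) : u.toWord.take k = v.toWord.take k :=
  (((cp_spec u v).2 _).1 h).2.2
theorem cp_symm (u v : FreeGroup α) : cp u v = cp v u := by
  apply le_antisymm
  · exact ((cp_spec v u).2 _).2 ⟨cp_le_right _ _, cp_le_left _ _, (cp_take le_rfl).symm⟩
  · exact ((cp_spec u v).2 _).2 ⟨cp_le_right _ _, cp_le_left _ _, (cp_take le_rfl).symm⟩
theorem cp_ultra {u v w : FreeGroup α} {k : ℕ} (h : k ≤ cp u v) (h' : k ≤ cp v w) : k ≤ cp u w :=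
  ((cp_spec u w).2 _).2 ⟨h.trans (cp_le_left _ _), h'.trans (cp_le_right _ _),
    (cp_take h).trans (cp_take h')⟩

theorem cp_self {w : FreeGroup α} (hw : w ≠ 1) : 2 * cp w⁻¹ w < w.norm := by
  by_contra! h
  obtain ⟨k, hk⟩ := Nat.even_or_odd' w.norm
  rcases hk with hk | hk
  · have ht := cp_take (show k ≤ cp w⁻¹ w by omega)
    have e := List.take_append_drop k w.toWord
    have hl : (List.drop k w.toWord).length = k := by
      have : w.toWord.length = w.norm := rfl
      rw [List.length_drop]; omega
    have h2 : List.take k w⁻¹.toWord = invRev (List.drop k w.toWord) := by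
      rw [toWord_inv]; conv_lhs => rw [← e]
      rw [invRev_append, List.take_append_of_le_length (by rw [invRev_length]; omega),
        List.take_of_length_le (by rw [invRev_length]; omega)]
    rw [← ht, h2] at e
    apply hw
    rw [← mk_toWord (x := w), ← e, ← mul_mk, ← inv_mk]; group
  · have ht := cp_take (show k + 1 ≤ cp w⁻¹ w by omega)
    have hl : w.toWord.length = 2 * k + 1 := hk
    have := congrArg (fun l => l[k]?) ht
    simp only [toWord_inv, invRev, List.getElem?_take, List.getElem?_reverse, List.getElem?_map,
      List.length_map, hl, lt_add_iff_pos_right, zero_lt_one, if_true] at this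
    rw [List.getElem?_reverse (by simp; omega), List.getElem?_map, List.length_map, hl,
      show 2 * k + 1 - 1 - k = k by omega, List.getElem?_eq_getElem (by omega)] at this
    simp at this
    have := congrArg Prod.snd this
    simp at this
end words
end EH
namespace EH
section niel
open FreeGroup
variable {n : ℕ}

abbrev Sl (n : ℕ) := Fin n × Bool
def rk (l : List (Sl n)) : ℕ :=
  Nat.ofDigits (Fintype.card (Sl n) + 2) (l.reverse.map fun s => (Fintype.equivFin (Sl n) s : ℕ))

theorem rk_append (l z : List (Sl n)) :
    rk (l ++ z) = rk z + (Fintype.card (Sl n) + 2) ^ z.length * rk l := by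
  simp [rk, Nat.ofDigits_append]

theorem rk_lt {l l' z : List (Sl n)} (h : rk l < rk l') : rk (l ++ z) < rk (l' ++ z) := by
  rw [rk_append, rk_append]
  have : 0 < (Fintype.card (Sl n) + 2) ^ z.length := by positivity
  have := Nat.mul_lt_mul_of_pos_left h this
  omega

theorem rk_inj {l l' : List (Sl n)} (hl : l.length = l'.length) (h : rk l = rk l') : l = l' := by
  have := Nat.ofDigits_inj_of_len_eq (b := Fintype.card (Sl n) + 2) (by omega) (by simp [hl]) ?_ ?_ h
  · apply List.reverse_injective
    exact List.map_injective_iff.2 (fun a b hab => (Fintype.equivFin (Sl n)).injective (Fin.ext hab)) this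
  · intro x hx
    obtain ⟨s, _, rfl⟩ := List.mem_map.1 hx
    have := (Fintype.equivFin (Sl n) s).2; omega
  · intro x hx
    obtain ⟨s, _, rfl⟩ := List.mem_map.1 hx
    have := (Fintype.equivFin (Sl n) s).2; omega

def lt (s : Sl n) : FreeGrp n := if s.2 then of s.1 else (of s.1)⁻¹
def ng (s : Sl n) : Sl n := (s.1, !s.2)
theorem lt_ng (s : Sl n) : lt (ng s) = (lt s)⁻¹ := by
  rcases s with ⟨i, b⟩; cases b <;> simp [lt, ng]
theorem ng_ng (s : Sl n) : ng (ng s) = s := by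
  rcases s with ⟨i, b⟩; simp [ng]
theorem ng_fst (s : Sl n) : (ng s).1 = s.1 := rfl
theorem eq_or_ng {s t : Sl n} (h : s.1 = t.1) : s = t ∨ s = ng t := by
  rcases s with ⟨i, b⟩; rcases t with ⟨j, c⟩
  simp [ng] at *; subst h; cases b <;> cases c <;> simp

theorem prod_lt (l : List (Sl n)) : (l.map lt).prod = mk l := by
  induction l with
  | nil => rfl
  | cons s l ih =>
    rw [List.map_cons, List.prod_cons, ih, show s :: l = [s] ++ l from rfl, ← mul_mk]
    congr 1
    rcases s with ⟨i, b⟩; cases b <;> simp [lt, of, inv_mk, invRev]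

theorem step {s t : Sl n} (h : s.1 ≠ t.1) : ∃ g ∈ Subgroup.closure (NG n),
    g (lt s) = lt s * lt t ∧ ∀ k, k ≠ s.1 → g (of k) = of k := by
  rcases s with ⟨i, b⟩; rcases t with ⟨j, c⟩
  simp at h
  have hR := R_mem_NG h
  have hi : iota i ∈ Subgroup.closure (NG n) := Subgroup.subset_closure (Or.inr (Or.inl ⟨i, rfl⟩))
  have hL : L i j ∈ Subgroup.closure (NG n) := mul_mem (mul_mem hi (inv_mem hR)) hi
  cases b <;> cases c
  · refine ⟨L i j, hL, ?_, ?_⟩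
    · simp [lt, h]
    · intro k hk; simp at hk; simp [h, hk]
  · refine ⟨(L i j)⁻¹, inv_mem hL, ?_, ?_⟩
    · simp [lt, h]
    · intro k hk; simp at hk; simp [h, hk]
  · refine ⟨(R i j)⁻¹, inv_mem hR, ?_, ?_⟩
    · simp [lt, h]
    · intro k hk; simp at hk; simp [h, hk]
  · refine ⟨R i j, hR, ?_, ?_⟩
    · simp [lt, h]
    · intro k hk; simp at hk; simp [h, hk]

def hf (w : FreeGrp n) : ℕ := rk (w.toWord.take ((w.norm + 1) / 2))
def gg (w : FreeGrp n) : ℕ := hf w + hf w⁻¹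
theorem gg_inv (w : FreeGrp n) : gg w⁻¹ = gg w := by simp [gg, add_comm]
def me1 (e : AutF n) : ℕ := ∑ i, (e (of i)).norm
def me2 (e : AutF n) : ℕ := ∑ i, gg (e (of i))
def Mn (e : AutF n) : Prop := ∀ h ∈ Subgroup.closure (NG n),
  me1 e ≤ me1 (e * h) ∧ (me1 (e * h) = me1 e → me2 e ≤ me2 (e * h))

theorem ex_min (e : AutF n) : ∃ h ∈ Subgroup.closure (NG n), Mn (e * h) := by
  obtain ⟨h, hh, hm⟩ := WellFounded.has_min (InvImage.wf (fun h : AutF n => (me1 (e*h), me2 (e*h)))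
    (WellFounded.prod_lex Nat.lt_wfRel.wf Nat.lt_wfRel.wf))
    (Subgroup.closure (NG n) : Set (AutF n)) ⟨1, one_mem _⟩
  refine ⟨h, hh, fun g hg => ?_⟩
  have := hm (h * g) (mul_mem hh hg)
  simp only [InvImage, Prod.lex_def, not_or, not_and, not_lt, ← mul_assoc] at this
  change ¬ (_ < _) ∧ (_ → ¬ (_ < _)) at this
  refine ⟨by omega, fun h' => ?_⟩
  have := this.2 h'
  omega

theorem norm_lt (e : AutF n) (s : Sl n) : (e (lt s)).norm = (e (of s.1)).norm := by
  rcases s with ⟨i, b⟩; cases b <;> simp [lt]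
theorem gg_lt (e : AutF n) (s : Sl n) : gg (e (lt s)) = gg (e (of s.1)) := by
  rcases s with ⟨i, b⟩; cases b <;> simp [lt, gg_inv]

theorem Mn.le {e : AutF n} (he : Mn e) {s t : Sl n} (h : s.1 ≠ t.1) :
    (e (lt s)).norm ≤ (e (lt s) * e (lt t)).norm ∧
    ((e (lt s) * e (lt t)).norm = (e (lt s)).norm → gg (e (lt s)) ≤ gg (e (lt s) * e (lt t))) := by
  obtain ⟨g, hg, g1, g2⟩ := step h
  have e1 : e (lt s) * e (lt t) = (e * g) (lt s) := by simp [g1]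
  have := he g hg
  rw [e1, norm_lt, norm_lt, gg_lt, gg_lt]
  unfold me1 me2 at this
  rw [← Finset.add_sum_erase _ _ (Finset.mem_univ s.1), ← Finset.add_sum_erase _ (fun i => ((e * g) (of i)).norm) (Finset.mem_univ s.1),
    ← Finset.add_sum_erase _ (fun i => gg (e (of i))) (Finset.mem_univ s.1), ← Finset.add_sum_erase _ (fun i => gg ((e * g) (of i))) (Finset.mem_univ s.1)] at this
  rw [Finset.sum_congr rfl (g := fun i => (e (of i)).norm) (s₁ := Finset.univ.erase s.1) (f := fun i => ((e * g) (of i)).norm) (fun i hi => by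
    simp [g2 i (Finset.ne_of_mem_erase hi)]), Finset.sum_congr rfl (g := fun i => gg (e (of i))) (s₁ := Finset.univ.erase s.1) (f := fun i => gg ((e * g) (of i))) (fun i hi => by
    simp [g2 i (Finset.ne_of_mem_erase hi)])] at this
  refine ⟨by omega, fun h => ?_⟩
  have := this.2 (by omega)
  omega

theorem lt_ne_one (e : AutF n) (s : Sl n) : e (lt s) ≠ 1 := by
  rcases s with ⟨i, b⟩; cases b <;> simp [lt]

theorem norm_pos' (e : AutF n) (s : Sl n) : 0 < (e (lt s)).norm :=
  Nat.pos_of_ne_zero fun h => lt_ne_one e s (norm_eq_zero.1 h)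

theorem e_ng (e : AutF n) (s : Sl n) : e (lt (ng s)) = (e (lt s))⁻¹ := by rw [lt_ng, _root_.map_inv]

theorem Mn.cp1 {e : AutF n} (he : Mn e) {s t : Sl n} (h : t ≠ ng s) :
    2 * cp (e (lt s))⁻¹ (e (lt t)) ≤ (e (lt t)).norm := by
  by_cases hst : t.1 = s.1
  · rcases eq_or_ng hst with rfl | h'
    · exact (cp_self (lt_ne_one e _)).le
    · exact absurd h' h
  · have := (he.le (s := s) (t := t) (Ne.symm hst)).1
    have h3 := cp_len (e (lt s))⁻¹ (e (lt t))
    simp only [inv_inv, norm_inv_eq] at h3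
    omega

theorem Mn.cp1' {e : AutF n} (he : Mn e) {s t : Sl n} (h : t ≠ ng s) :
    2 * cp (e (lt s))⁻¹ (e (lt t)) ≤ (e (lt s)).norm := by
  have := he.cp1 (s := ng t) (t := ng s) (by rw [ng_ng]; exact h.symm)
  rwa [e_ng, e_ng, inv_inv, norm_inv_eq, cp_symm] at this

/-- the tie lemma -/
theorem tie {u v : FreeGrp n} {k : ℕ} (hv : v.norm = 2 * k) (hu : 2 * k ≤ u.norm) (hk : cp u⁻¹ v = k)
    (hr : rk (v⁻¹.toWord.take k) < rk (v.toWord.take k)) : gg (u * v) < gg u := by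
  obtain ⟨c, a, b, h1, h2, h3⟩ := lcp u⁻¹.toWord v.toWord
  have h4 := word_split h1 h2 h3
  rw [inv_inv] at h4
  have n1 : u.norm = c.length + a.length := by rw [← norm_inv_eq]; simp [FreeGroup.norm, h1]
  have n2 : v.norm = c.length + b.length := by simp [FreeGroup.norm, h2]
  have n3 : (u * v).norm = a.length + b.length := by simp [FreeGroup.norm, h4]
  have h5 := cp_len u⁻¹ v
  rw [inv_inv, norm_inv_eq] at h5
  have hc : c.length = k := by omega
  have hb : b.length = k := by omega
  have h1' : u.toWord = invRev a ++ invRev c := by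
    rw [← invRev_append, ← h1, toWord_inv, invRev_invRev]
  have h4' : (u * v)⁻¹.toWord = invRev b ++ a := by
    rw [toWord_inv, h4, invRev_append, invRev_invRev]
  have hvi : v⁻¹.toWord.take k = invRev b := by
    rw [toWord_inv, h2, invRev_append, List.take_left']
    simp [hb]
  have hvk : v.toWord.take k = c := by rw [h2, List.take_left' hc]
  rw [hvi, hvk] at hr
  have n4 : (u * v).norm = u.norm := by omega
  unfold gg hf
  rw [norm_inv_eq, norm_inv_eq, n4, h4, h4', h1, h1']
  have hm : (u.norm + 1) / 2 ≤ a.length := by omega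
  have hm' : k ≤ (u.norm + 1) / 2 := by omega
  generalize (u.norm + 1) / 2 = m at *
  rw [List.take_append_of_le_length (l₁ := invRev a) (by simpa using hm),
    List.take_append_of_le_length (l₁ := invRev a) (by simpa using hm)]
  obtain ⟨d, rfl⟩ := Nat.exists_eq_add_of_le hm'
  have q1 : List.take (k + d) (invRev b ++ a) = invRev b ++ a.take d := by
    rw [← List.take_length_add_append]; simp [hb]
  have q2 : List.take (k + d) (c ++ a) = c ++ a.take d := by
    rw [← List.take_length_add_append]; simp [hc]
  rw [q1, q2]
  have := rk_lt (z := a.take d) hr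
  omega

theorem Mn.tie {e : AutF n} (he : Mn e) {s t : Sl n} (h : s.1 ≠ t.1) {k : ℕ}
    (hv : (e (lt t)).norm = 2 * k) (hk : cp (e (lt s))⁻¹ (e (lt t)) = k) :
    rk ((e (lt t)).toWord.take k) ≤ rk ((e (lt t))⁻¹.toWord.take k) := by
  by_contra! hr
  have h1 := he.cp1' (s := s) (t := t) (by rintro rfl; exact h rfl)
  have h2 := EH.tie hv (by omega) hk hr
  have h3 := (he.le h).2
  have h5 := cp_len (e (lt s))⁻¹ (e (lt t))
  simp only [inv_inv, norm_inv_eq] at h5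
  have := h3 (by omega)
  omega

theorem Mn.cp2 {e : AutF n} (he : Mn e) {s t u : Sl n} (h : t ≠ ng s) (h' : u ≠ ng t) :
    cp (e (lt s))⁻¹ (e (lt t)) + cp (e (lt t))⁻¹ (e (lt u)) < (e (lt t)).norm := by
  by_contra! hc
  have h1 := he.cp1 h
  have h2 := he.cp1' h'
  have hs := cp_self (lt_ne_one e t)
  obtain ⟨k, hk⟩ : ∃ k, cp (e (lt s))⁻¹ (e (lt t)) = k := ⟨_, rfl⟩
  have hk' : cp (e (lt t))⁻¹ (e (lt u)) = k := by omega
  have hn : (e (lt t)).norm = 2 * k := by omega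
  have hst : s.1 ≠ t.1 := by
    intro hst
    rcases eq_or_ng hst with rfl | rfl
    · omega
    · rw [ng_ng] at h; exact h rfl
  have hut : u.1 ≠ t.1 := by
    intro hst
    rcases eq_or_ng hst with rfl | rfl
    · omega
    · exact h' rfl
  have a1 := he.tie hst hn hk
  have a2 := he.tie (s := ng u) (t := ng t) hut (by rw [e_ng, norm_inv_eq]; exact hn)
    (by rw [e_ng, e_ng, inv_inv, cp_symm]; exact hk')
  rw [e_ng, inv_inv] at a2
  have a3 := rk_inj (by simp [← norm.eq_1]) (le_antisymm a2 a1)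
  have := ((cp_spec (e (lt t))⁻¹ (e (lt t))).2 k).2 ⟨by rw [norm_inv_eq]; omega, by omega, a3⟩
  omega

theorem Mn.prod {e : AutF n} (he : Mn e) : ∀ (l : List (Sl n)) (s t : Sl n),
    List.IsChain (fun a b => b ≠ ng a) (s :: t :: l) →
    (e (lt s)).norm + 1 ≤ (((s :: t :: l).map fun s => e (lt s)).prod).norm +
      cp (e (lt s))⁻¹ (e (lt t)) ∧
    (e (lt s)).norm ≤ cp (e (lt s)) (((s :: t :: l).map fun s => e (lt s)).prod) +
      cp (e (lt s))⁻¹ (e (lt t)) := by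
  intro l
  induction l with
  | nil =>
    intro s t h
    simp at h
    simp only [List.map_cons, List.map_nil, List.prod_cons, List.prod_nil, mul_one]
    have h1 := he.cp1 h
    have h2 := cp_len (e (lt s))⁻¹ (e (lt t))
    have h3 := norm_pos' e t
    have h4 := cp_len (e (lt s)) (e (lt s) * e (lt t))
    simp only [inv_inv, norm_inv_eq, inv_mul_cancel_left] at h2 h4
    omega
  | cons u l ih =>
    intro s t h
    rw [List.isChain_cons_cons] at h
    have ⟨i1, i2⟩ := ih t u h.2
    have h' := h.2
    rw [List.isChain_cons_cons] at h'
    rw [List.map_cons, List.prod_cons]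
    obtain ⟨Q, hQ⟩ : ∃ Q, Q = ((t :: u :: l).map fun s => e (lt s)).prod := ⟨_, rfl⟩
    rw [← hQ] at i1 i2 ⊢
    have h1 := he.cp2 h.1 h'.1
    have key : cp (e (lt s))⁻¹ Q = cp (e (lt s))⁻¹ (e (lt t)) := by
      apply le_antisymm
      · by_contra! hc
        have := cp_ultra (k := cp (e (lt s))⁻¹ (e (lt t)) + 1) (u := (e (lt s))⁻¹) (v := Q) (w := e (lt t))
          (by omega) (by rw [cp_symm Q]; omega)
        omega
      · refine cp_ultra (v := e (lt t)) le_rfl ?_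
        omega
    have h2 := cp_len (e (lt s))⁻¹ Q
    have h4 := cp_len (e (lt s)) (e (lt s) * Q)
    simp only [inv_inv, norm_inv_eq, inv_mul_cancel_left] at h2 h4
    omega

theorem Mn.perm {e : AutF n} (he : Mn e) (i : Fin n) : ∃ s : Sl n, e (lt s) = of i := by
  obtain ⟨l, hl⟩ : ∃ l, l = (e⁻¹ (of i)).toWord := ⟨_, rfl⟩
  have hr : List.IsChain (fun a b => b ≠ ng a) l := by
    rw [hl]
    have := isReduced_toWord (x := e⁻¹ (of i))
    refine List.IsChain.imp ?_ this
    rintro ⟨a, b⟩ ⟨c, d⟩ h h'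
    simp [ng] at h' h
    obtain ⟨rfl, rfl⟩ := h'
    simp at h
  have hp : ((l.map fun s => e (lt s)).prod) = of i := by
    have : (l.map fun s => e (lt s)) = (l.map lt).map e := by simp
    rw [this, ← map_list_prod, prod_lt, hl, mk_toWord]
    exact e.apply_symm_apply _
  have hn : ((l.map fun s => e (lt s)).prod).norm = 1 := by rw [hp, norm_of]
  rcases l with _ | ⟨s, _ | ⟨t, l⟩⟩
  · simp at hn
  · exact ⟨s, by simpa using hp⟩
  · have h1 := (he.prod l s t hr).1
    rw [List.isChain_cons_cons] at hr
    have h2 := he.cp1' hr.1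
    have := norm_pos' e s
    omega

theorem lt_fst {s t : Sl n} (h : s.1 = t.1) : lt s = lt t ∨ lt s = (lt t)⁻¹ := by
  rcases eq_or_ng h with rfl | rfl
  · exact Or.inl rfl
  · exact Or.inr (lt_ng _)

theorem signs : ∀ (m : ℕ) (e : AutF n), (∀ i, e (of i) = of i ∨ e (of i) = (of i)⁻¹) →
    (Finset.univ.filter fun i => e (of i) ≠ of i).card = m → e ∈ Subgroup.closure (NG n) := by
  intro m
  induction m with
  | zero =>
    intro e h h0
    have : e = 1 := by
      apply aut_ext; intro k
      by_contra hk
      have : k ∈ (Finset.univ.filter fun i => e (of i) ≠ of i) := by simpa using hk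
      rw [Finset.card_eq_zero.1 h0] at this; simp at this
    rw [this]; exact one_mem _
  | succ m ih =>
    intro e h hm
    obtain ⟨i, hi⟩ := Finset.card_pos.1 (by rw [hm]; omega)
    have hi' := (h i).resolve_left (by simpa using hi)
    have hio : iota i ∈ Subgroup.closure (NG n) := Subgroup.subset_closure (Or.inr (Or.inl ⟨i, rfl⟩))
    have : e * iota i ∈ Subgroup.closure (NG n) := by
      apply ih
      · intro k
        by_cases hk : k = i
        · subst hk; left; simp [hi']
        · simpa [hk] using h k
      · have : (Finset.univ.filter fun k => (e * iota i) (of k) ≠ of k) =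
            (Finset.univ.filter fun i => e (of i) ≠ of i).erase i := by
          ext k
          by_cases hk : k = i
          · subst hk; simp [hi']
          · simp [hk]
        rw [this, Finset.card_erase_of_mem hi, hm]; rfl
    exact (Subgroup.mul_mem_cancel_right _ hio).1 this

theorem signed {e : AutF n} (h : ∀ i, ∃ s : Sl n, e (of i) = lt s) : e ∈ Subgroup.closure (NG n) := by
  choose f hf using h
  have hinj : Function.Injective fun i => (f i).1 := by
    intro i j hij
    by_contra hne
    rcases lt_fst hij with h | h
    · rw [← hf, ← hf] at h
      exact hne (of_injective (e.injective h))
    · rw [← hf, ← hf, ← _root_.map_inv] at h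
      have := congrArg toWord (e.injective h)
      simp [toWord_inv, invRev] at this
  let σ := Equiv.ofBijective _ (Finite.injective_iff_bijective.1 hinj)
  have hs : pm σ⁻¹ ∈ Subgroup.closure (NG n) := Subgroup.subset_closure (Or.inl ⟨_, rfl⟩)
  have h2 : pm σ⁻¹ * e ∈ Subgroup.closure (NG n) := by
    apply signs _ _ _ rfl
    intro i
    have e1 : (pm σ⁻¹ * e) (of i) = pm σ⁻¹ (lt (f i)) := by rw [← hf]; rfl
    rw [e1]
    have e2 : σ⁻¹ (f i).1 = i := by
      rw [Equiv.Perm.inv_eq_iff_eq]; rfl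
    unfold lt
    split_ifs <;> simp [e2]
  exact (Subgroup.mul_mem_cancel_left _ hs).1 h2

theorem nielsen (n : ℕ) : Subgroup.closure (NG n) = ⊤ := by
  rw [eq_top_iff]
  intro e _
  obtain ⟨h, hh, hm⟩ := ex_min e
  have : (e * h)⁻¹ ∈ Subgroup.closure (NG n) := by
    apply signed
    intro i
    obtain ⟨s, hs⟩ := hm.perm i
    exact ⟨s, by rw [← hs]; exact (e * h).symm_apply_apply _⟩
  exact (Subgroup.mul_mem_cancel_right _ hh).1 ((inv_mem_iff).1 this)

instance I'_normal (n : ℕ) : (I' n).Normal :=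
  ⟨fun u hu g => (closure_conj (g := g) (by rw [nielsen]; trivial)).1 u hu⟩
end niel
end EH

set_option linter.all false
set_option linter.unusedSimpArgs false
namespace EH

variable {n : ℕ}

theorem cc {i j k l : Fin n} (hij : i ≠ j) (hkl : k ≠ l) (hik : i ≠ k) (hil : i ≠ l) (hkj : k ≠ j) :
    C i j * C k l = C k l * C i j := by
  have := hij.symm; have := hkl.symm; have := hik.symm; have := hil.symm; have := hkj.symm
  apply aut_ext; intro x
  by_cases h0 : x = i
  · subst h0; simp [*]
  by_cases h1 : x = k
  · subst h1; simp [*]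
  simp [*]

theorem cm {i j k l m : Fin n} (hij : i ≠ j) (hkl : k ≠ l) (hkm : k ≠ m) (hik : i ≠ k) (hil : i ≠ l)
    (him : i ≠ m) (hkj : k ≠ j) : C i j * M k l m = M k l m * C i j := by
  have := hij.symm; have := hkl.symm; have := hik.symm; have := hil.symm; have := hkj.symm
  have := hkm.symm; have := him.symm
  apply aut_ext; intro x
  by_cases h0 : x = i
  · subst h0; simp [*]
  by_cases h1 : x = k
  · subst h1; simp [*]
  simp [*]

theorem cik {i j k : Fin n} (hij : i ≠ j) (hik : i ≠ k) (hjk : j ≠ k) :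
    C i j * (C i k * C j k) = C i k * C j k * C i j := by
  have := hij.symm; have := hik.symm; have := hjk.symm
  apply aut_ext; intro x
  by_cases h0 : x = i
  · subst h0; simp [*, mul_assoc]
  by_cases h1 : x = j
  · subst h1; simp [*, mul_assoc]
  simp [*]

structure Coc (X t : AutF n → ℂ) : Prop where
  one : X 1 = 1
  mul : ∀ a ∈ I' n, ∀ b ∈ I' n, X (a * b) = X a * X b
  tmul : ∀ a ∈ I' n, ∀ b ∈ I' n, t (a * b) = t a + X a * t b

namespace Coc

variable {X t : AutF n → ℂ}

theorem inv_ne (h : Coc X t) {a : AutF n} (ha : a ∈ I' n) : X a * X a⁻¹ = 1 := by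
  rw [← h.mul a ha _ (inv_mem ha), mul_inv_cancel, h.one]

theorem t_one (h : Coc X t) : t 1 = 0 := by
  have := h.tmul 1 (one_mem _) 1 (one_mem _)
  rw [h.one] at this
  simpa using this

/-- elements fixing `q` -/
def F (h : Coc X t) (q : ℂ) : Subgroup (AutF n) where
  carrier := {a | a ∈ I' n ∧ t a = (1 - X a) * q}
  one_mem' := ⟨one_mem _, by rw [h.t_one, h.one]; ring⟩
  mul_mem' := by
    rintro a b ⟨ha, ha'⟩ ⟨hb, hb'⟩
    refine ⟨mul_mem ha hb, ?_⟩
    rw [h.tmul a ha b hb, h.mul a ha b hb, ha', hb']; ring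
  inv_mem' := by
    rintro a ⟨ha, ha'⟩
    refine ⟨inv_mem ha, ?_⟩
    have h1 := h.tmul a ha _ (inv_mem ha)
    have h2 := h.inv_ne ha
    rw [mul_inv_cancel, h.t_one, ha'] at h1
    linear_combination (-X a⁻¹) * h1 + (t a⁻¹ - q) * (- h2)

theorem exists_fix (h : Coc X t) {a : AutF n} (ha : a ∈ I' n) (hX : X a ≠ 1) : ∃ q, a ∈ h.F q := by
  refine ⟨t a / (1 - X a), ha, ?_⟩
  rw [mul_div_cancel₀]
  exact sub_ne_zero.2 hX.symm

theorem comm (h : Coc X t) {a b : AutF n} {q : ℂ} (ha : a ∈ h.F q) (hX : X a ≠ 1) (hb : b ∈ I' n)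
    (hab : a * b = b * a) : b ∈ h.F q := by
  refine ⟨hb, ?_⟩
  obtain ⟨ha, ha'⟩ := ha
  have h1 := h.tmul a ha b hb
  rw [hab, h.tmul b hb a ha, ha'] at h1
  have : (1 - X a) * t b = (1 - X a) * ((1 - X b) * q) := by linear_combination h1
  exact mul_left_cancel₀ (sub_ne_zero.2 hX.symm) this

theorem uniq (h : Coc X t) {a : AutF n} {p q : ℂ} (ha : a ∈ h.F p) (hb : a ∈ h.F q) (hX : X a ≠ 1) :
    p = q := mul_left_cancel₀ (sub_ne_zero.2 hX.symm) (ha.2.symm.trans hb.2)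

theorem conj (h : Coc X t) (g : AutF n) :
    Coc (fun u => X (g * u * g⁻¹)) (fun u => t (g * u * g⁻¹)) := by
  have e : ∀ a b : AutF n, g * (a * b) * g⁻¹ = (g * a * g⁻¹) * (g * b * g⁻¹) := by
    intro a b; group
  refine ⟨by simp [h.one], fun a ha b hb => ?_, fun a ha b hb => ?_⟩
  · simp only [e]
    exact h.mul _ ((I'_normal n).conj_mem a ha g) _ ((I'_normal n).conj_mem b hb g)
  · simp only [e]
    exact h.tmul _ ((I'_normal n).conj_mem a ha g) _ ((I'_normal n).conj_mem b hb g)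

theorem mem_conj (h : Coc X t) {g u : AutF n} {q : ℂ} :
    u ∈ (h.conj g).F q ↔ g * u * g⁻¹ ∈ h.F q := by
  constructor
  · rintro ⟨a, b⟩; exact ⟨(I'_normal n).conj_mem u a g, b⟩
  · rintro ⟨a, b⟩
    refine ⟨?_, b⟩
    have := (I'_normal n).conj_mem _ a g⁻¹
    simpa [mul_assoc] using this

def good (h : Coc X t) : Prop := ∃ q, I' n ≤ h.F q

theorem good_conj (h : Coc X t) (g : AutF n) (hg : (h.conj g).good) : h.good := by
  obtain ⟨q, hq⟩ := hg
  refine ⟨q, fun u hu => ?_⟩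
  have := h.mem_conj.1 (hq ((I'_normal n).conj_mem u hu g⁻¹))
  simpa [mul_assoc] using this

theorem lemA (h : Coc X t) {q : ℂ} {i j k l : Fin n} (hij : i ≠ j) (hik : i ≠ k) (hjk : j ≠ k)
    (hil : i ≠ l) (hjl : j ≠ l) (hkl : k ≠ l) (hX : X (C i j) ≠ 1) (hq : C i j ∈ h.F q) :
    C i k ∈ h.F q ∧ C j k ∈ h.F q := by
  have hprod : C i k * C j k ∈ h.F q :=
    h.comm hq hX (mul_mem (C_mem hik) (C_mem hjk)) (cik hij hik hjk)
  suffices C i k ∈ h.F q ∨ C j k ∈ h.F q by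
    rcases this with h1 | h1
    · exact ⟨h1, (Subgroup.mul_mem_cancel_left _ h1).1 hprod⟩
    · exact ⟨(Subgroup.mul_mem_cancel_right _ h1).1 hprod, h1⟩
  set κ := (C l k)⁻¹ * M l k j * C l k with hκ
  have e1 : R l j * C j k = κ * C j k * R l j := c6 hjl.symm hkl hjk.symm
  have comj : ∀ m, i ≠ m → l ≠ m → C i m * κ = κ * C i m := by
    intro m him hlm
    have z1 : Commute (C i m) (C l k) := cc him hkl.symm hil hik hlm
    have z2 : Commute (C i m) (M l k j) := cm him hkl.symm hjl.symm hil hik hij hlm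
    exact ((z1.inv_right.mul_right z2).mul_right z1)
  have κI : κ ∈ I' n := mul_mem (mul_mem (inv_mem (C_mem hkl.symm)) (M_mem hkl.symm hjl.symm)) (C_mem hkl.symm)
  have hκF : κ ∈ h.F q := h.comm hq hX κI (comj j hij hjl.symm)
  by_cases hXκ : X κ = 1
  · right
    have tκ : t κ = 0 := by rw [hκF.2, hXκ]; ring
    have e2 : R l j * C i l = C i l * C i j * R l j := c2 hjl.symm hil hij
    have e3 : C j k * C i l = C i l * C j k := cc hjk hil hij.symm hjl hik
    have e4 : (κ * C j k) * (C i l * C i j) = (C i l * C i j) * (κ * C j k) := by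
      have : (R l j * C j k * (R l j)⁻¹) * (R l j * C i l * (R l j)⁻¹) =
        (R l j * C i l * (R l j)⁻¹) * (R l j * C j k * (R l j)⁻¹) := by
        simp only [mul_assoc, inv_mul_cancel_left]
        rw [← mul_assoc (C j k), e3, mul_assoc]
      rwa [e1, e2, mul_inv_cancel_right, mul_inv_cancel_right] at this
    have Iil := C_mem hil
    have Ijk := C_mem hjk
    have Iij := C_mem hij
    have t3 := congrArg t e3
    rw [h.tmul _ Ijk _ Iil, h.tmul _ Iil _ Ijk] at t3
    have t4 := congrArg t e4
    rw [h.tmul _ (mul_mem κI Ijk) _ (mul_mem Iil Iij), h.tmul _ (mul_mem Iil Iij) _ (mul_mem κI Ijk),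
      h.tmul _ κI _ Ijk, h.mul _ κI _ Ijk, h.tmul _ Iil _ Iij, h.mul _ Iil _ Iij, tκ, hXκ, hq.2] at t4
    refine ⟨Ijk, ?_⟩
    have y0 : X (C i l) ≠ 0 := fun h0 => by have := h.inv_ne Iil; simp [h0] at this
    have z0 : (1 - X (C i j)) ≠ 0 := sub_ne_zero.2 hX.symm
    apply mul_left_cancel₀ (mul_ne_zero y0 z0)
    linear_combination t4 - t3
  · left
    exact h.comm hκF hXκ (C_mem hik) (comj k hik hkl.symm).symm

theorem ex4 (hn : 4 ≤ n) (a b c : Fin n) : ∃ l, a ≠ l ∧ b ≠ l ∧ c ≠ l := by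
  by_contra! hc
  have : (Finset.univ : Finset (Fin n)) ⊆ {a, b, c} := by
    intro l _
    have := hc l
    simp only [Finset.mem_insert, Finset.mem_singleton]
    by_cases h1 : a = l
    · simp [h1]
    by_cases h2 : b = l
    · simp [h2]
    right; right; exact (this h1 h2).symm
  have := Finset.card_le_card this
  have h3 : ({a, b, c} : Finset (Fin n)).card ≤ 3 := Finset.card_le_three
  simp at this; omega

theorem lam (h : Coc X t) (hn : 4 ≤ n) {q : ℂ} {a b i j : Fin n} (hab : a ≠ b) (hX : X (C a b) ≠ 1)
    (hq : C a b ∈ h.F q) (hij : i ≠ j) (hja : j ≠ a) : C i j ∈ h.F q := by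
  by_cases hjb : i = a ∧ j = b
  · rw [hjb.1, hjb.2]; exact hq
  obtain ⟨l, h1, h2, h3⟩ := ex4 hn a b j
  by_cases hia : i = a
  · subst hia
    have hjb : j ≠ b := fun h => hjb ⟨rfl, h⟩
    exact (h.lemA hab hij hjb.symm h1 h2 h3 hX hq).1
  by_cases hib : i = b
  · subst hib
    exact (h.lemA hab hja.symm hij h1 h2 h3 hX hq).2
  exact h.comm hq hX (C_mem hij) (cc hab hij (Ne.symm hia) hja.symm hib)

theorem M_eq {i j k : Fin n} (hij : i ≠ j) (hik : i ≠ k) (hjk : j ≠ k) :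
    M i k j = R i k * C i j * (R i k)⁻¹ * (C i j)⁻¹ := by
  rw [c4 hik hij.symm hjk]; group

theorem lemD1 (h : Coc X t) (hn : 4 ≤ n) {q : ℂ} {a b i j k : Fin n} (hab : a ≠ b)
    (hX : X (C a b) ≠ 1) (hq : C a b ∈ h.F q) (hij : i ≠ j) (hik : i ≠ k) (hjk : j ≠ k)
    (hai : a ≠ i) (haj : a ≠ j) (hak : a ≠ k) (hib : b ≠ i) : M i k j ∈ h.F q := by
  rw [M_eq hij hik hjk]
  refine mul_mem ?_ (inv_mem (h.lam hn hab hX hq hij haj.symm))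
  rw [← h.mem_conj]
  have e : R i k * C a b * (R i k)⁻¹ = C a b := by rw [c1 hik hai hak hib hab]; group
  refine (h.conj (R i k)).lam hn hab ?_ ?_ hij haj.symm
  · simpa only [e] using hX
  · rw [h.mem_conj, e]; exact hq

theorem lemD (h : Coc X t) (hn : 4 ≤ n) {q : ℂ} {a b i j k : Fin n} (hab : a ≠ b)
    (hX : X (C a b) ≠ 1) (hq : C a b ∈ h.F q) (hij : i ≠ j) (hik : i ≠ k) (hjk : j ≠ k)
    (hai : a ≠ i) (haj : a ≠ j) (hak : a ≠ k) : M i k j ∈ h.F q := by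
  by_cases hib : b = i
  · subst hib
    have hk : C a k ∈ h.F q := h.lam hn hab hX hq hak hak.symm
    by_cases hXk : X (C a k) = 1
    · rw [M_eq hij hik hjk]
      refine mul_mem ?_ (inv_mem (h.lam hn hab hX hq hij haj.symm))
      rw [← h.mem_conj]
      have e : R b k * C a b * (R b k)⁻¹ = C a b * C a k := by rw [c2 hik hai hak]; group
      refine (h.conj (R b k)).lam hn hab ?_ ?_ hij haj.symm
      · simp only [e]; rw [h.mul _ (C_mem hab) _ (C_mem hak), hXk]; simpa using hX
      · rw [h.mem_conj, e]; exact mul_mem hq hk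
    · exact h.lemD1 hn hak hXk hk hij hik hjk hai haj hak hik.symm
  · exact h.lemD1 hn hab hX hq hij hik hjk hai haj hak hib

theorem lemD2 (h : Coc X t) (hn : 4 ≤ n) {q : ℂ} {i j k : Fin n} (hij : i ≠ j) (hik : i ≠ k)
    (hjk : j ≠ k) (hX : X (C i k) ≠ 1) (hq : C i k ∈ h.F q) : M i k j ∈ h.F q := by
  rw [M_eq hij hik hjk]
  refine mul_mem ?_ (inv_mem (h.lam hn hik hX hq hij hij.symm))
  rw [← h.mem_conj]
  have e : R i k * C i k * (R i k)⁻¹ = C i k := by rw [c3 hik]; group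
  refine (h.conj (R i k)).lam hn hik ?_ ?_ hij hij.symm
  · simpa only [e] using hX
  · rw [h.mem_conj, e]; exact hq

theorem good_of_gen (h : Coc X t) {q : ℂ} (h1 : ∀ i j, i ≠ j → C i j ∈ h.F q)
    (h2 : ∀ i j k, i ≠ j → i ≠ k → j ≠ k → M i j k ∈ h.F q) : h.good := by
  refine ⟨q, ?_⟩
  rw [I', Subgroup.closure_le]
  rintro u (⟨i, j, hij, rfl⟩ | ⟨i, j, k, hij, hik, hjk, rfl⟩)
  · exact h1 _ _ hij
  · exact h2 _ _ _ hij hik hjk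

theorem good3 (h : Coc X t) (hn : 4 ≤ n) {i j k : Fin n} (hij : i ≠ j) (hik : i ≠ k)
    (hjk : j ≠ k) (X1 : X (C i j) ≠ 1) (X2 : X (C j i) ≠ 1) (X3 : X (C k j) ≠ 1) : h.good := by
  obtain ⟨q, q1⟩ := h.exists_fix (C_mem hij) X1
  have q3 : C k j ∈ h.F q := h.lam hn hij X1 q1 hjk.symm hij.symm
  have q2 : C j i ∈ h.F q := h.lam hn hjk.symm X3 q3 hij.symm hik
  apply h.good_of_gen (q := q)
  · intro a b hab
    by_cases hb : b = i
    · subst hb; exact h.lam hn hjk.symm X3 q3 hab hik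
    · exact h.lam hn hij X1 q1 hab hb
  · intro a b c hab hac hbc
    by_cases hi : i ≠ a ∧ i ≠ b ∧ i ≠ c
    · exact h.lemD hn hij X1 q1 hac hab hbc.symm hi.1 hi.2.2 hi.2.1
    by_cases hj : j ≠ a ∧ j ≠ b ∧ j ≠ c
    · exact h.lemD hn hij.symm X2 q2 hac hab hbc.symm hj.1 hj.2.2 hj.2.1
    by_cases hk : k ≠ a ∧ k ≠ b ∧ k ≠ c
    · exact h.lemD hn hjk.symm X3 q3 hac hab hbc.symm hk.1 hk.2.2 hk.2.1
    have m1 := h.lemD2 hn hik hij hjk.symm X1 q1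
    have m2 := h.lemD2 hn hjk hij.symm hik.symm X2 q2
    have m3 := h.lemD2 hn hik.symm hjk.symm hij X3 q3
    have m1' := inv_mem m1
    have m2' := inv_mem m2
    have m3' := inv_mem m3
    rw [M_inv] at m1' m2' m3'
    have hi' : i = a ∨ i = b ∨ i = c := by by_contra! hc; exact hi hc
    have hj' : j = a ∨ j = b ∨ j = c := by by_contra! hc; exact hj hc
    have hk' : k = a ∨ k = b ∨ k = c := by by_contra! hc; exact hk hc
    clear hi hj hk
    rcases hi' with rfl | rfl | rfl <;> rcases hj' with rfl | rfl | rfl <;>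
      rcases hk' with rfl | rfl | rfl <;> first | assumption | exact absurd rfl ‹_›

/-- product formula -/
theorem prodC (h : Coc X t) (j : Fin n) (s : Finset (Fin n)) (hj : j ∉ s) :
    ∃ u ∈ I' n, X u = ∏ i ∈ s, X (C i j) ∧ ∀ l, u (FreeGroup.of l) =
      if l ∈ s then (FreeGroup.of j)⁻¹ * FreeGroup.of l * FreeGroup.of j else FreeGroup.of l := by
  induction s using Finset.induction_on with
  | empty => exact ⟨1, one_mem _, by simp [h.one], by simp⟩
  | insert i s his ih =>
    obtain ⟨u, hu, hX, hu'⟩ := ih (fun h => hj (Finset.mem_insert_of_mem h))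
    have hij : i ≠ j := fun e => hj (e ▸ Finset.mem_insert_self _ _)
    refine ⟨C i j * u, mul_mem (C_mem hij) hu, ?_, ?_⟩
    · rw [h.mul _ (C_mem hij) _ hu, hX, Finset.prod_insert his]
    · intro l
      have := hij.symm
      by_cases hl : l = i
      · subst hl; simp [hu', his, hij]
      · by_cases hls : l ∈ s <;> simp [hu', hls, hl, hij, hij.symm]

theorem prodA (h : Coc X t) (j : Fin n) : MulAut.conj (FreeGroup.of j)⁻¹ ∈ I' n ∧
    X (MulAut.conj (FreeGroup.of j)⁻¹) = ∏ i ∈ Finset.univ.erase j, X (C i j) := by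
  obtain ⟨u, hu, hX, hu'⟩ := h.prodC j (Finset.univ.erase j) (by simp)
  have : u = MulAut.conj (FreeGroup.of j)⁻¹ := by
    apply aut_ext; intro l
    rw [hu']
    by_cases hl : l = j
    · subst hl; simp
    · simp [hl]
  rw [← this]; exact ⟨hu, hX⟩

end Coc

theorem conjI : ∀ w : FreeGrp n, MulAut.conj w ∈ I' n := by
  have hc : Coc (fun _ : AutF n => 1) (fun _ => 0) := ⟨rfl, by simp, by simp⟩
  have : (⊤ : Subgroup (FreeGrp n)) ≤ (I' n).comap MulAut.conj := by
    rw [← FreeGroup.closure_range_of, Subgroup.closure_le]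
    rintro _ ⟨j, rfl⟩
    have := inv_mem (hc.prodA j).1
    rw [map_inv, inv_inv] at this
    exact this
  exact fun w => this trivial

theorem conj_comm {u : AutF n} {w : FreeGrp n} (h : u w = w) : MulAut.conj w * u = u * MulAut.conj w := by
  ext x; simp [h]

theorem conj_A (u : AutF n) (w : FreeGrp n) : u * MulAut.conj w * u⁻¹ = MulAut.conj (u w) := by
  ext x; simp

theorem Rprod (j : Fin n) (s : Finset (Fin n)) (hj : j ∉ s) :
    ∃ u : AutF n, ∀ l, u (FreeGroup.of l) =
      if l ∈ s then FreeGroup.of l * FreeGroup.of j else FreeGroup.of l := by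
  induction s using Finset.induction_on with
  | empty => exact ⟨1, by simp⟩
  | insert i s his ih =>
    obtain ⟨u, hu'⟩ := ih (fun h => hj (Finset.mem_insert_of_mem h))
    have hij : i ≠ j := fun e => hj (e ▸ Finset.mem_insert_self _ _)
    refine ⟨R i j * u, ?_⟩
    intro l
    have := hij.symm
    by_cases hl : l = i
    · subst hl; simp [hu', his, hij]
    · by_cases hls : l ∈ s <;> simp [hu', hls, hl, hij, hij.symm]

namespace Coc

variable {X t : AutF n → ℂ}

theorem XA_inv (h : Coc X t) (w : FreeGrp n) : X (MulAut.conj w) * X (MulAut.conj w⁻¹) = 1 := by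
  rw [map_inv]; exact h.inv_ne (conjI w)

theorem active_of_A (h : Coc X t) {j : Fin n} (hX : X (MulAut.conj (FreeGroup.of j)) ≠ 1) :
    ∃ i, i ≠ j ∧ X (C i j) ≠ 1 := by
  by_contra! hc
  have h1 := (h.prodA j).2
  rw [Finset.prod_eq_one (fun i hi => hc i (Finset.ne_of_mem_erase hi))] at h1
  have h2 := h.XA_inv (FreeGroup.of j)
  rw [h1, mul_one] at h2
  exact hX h2

theorem goodT1 (h : Coc X t) (hn : 4 ≤ n) (hX : ∀ j, X (MulAut.conj (FreeGroup.of j)) ≠ 1) : h.good := by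
  have : ∀ j, ∃ q, MulAut.conj (FreeGroup.of j) ∈ h.F q := fun j => h.exists_fix (conjI _) (hX j)
  choose p hp using this
  have hfix : ∀ u ∈ I' n, ∀ l, u (FreeGroup.of l) = FreeGroup.of l → u ∈ h.F (p l) := by
    intro u hu l hul
    exact h.comm (hp l) (hX l) hu (conj_comm hul)
  have hC : ∀ i j l, i ≠ j → l ≠ i → C i j ∈ h.F (p l) := by
    intro i j l hij hl
    exact hfix _ (C_mem hij) l (by simp [hij, hl])
  have hM : ∀ i j k l, i ≠ j → i ≠ k → l ≠ i → M i j k ∈ h.F (p l) := by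
    intro i j k l hij hik hl
    exact hfix _ (M_mem hij hik) l (by simp [hij, hik, hl])
  have hact : ∀ j, ∃ i, i ≠ j ∧ X (C i j) ≠ 1 := fun j => h.active_of_A (hX j)
  obtain ⟨i0, hi0, hX0⟩ := hact ⟨0, by omega⟩
  obtain ⟨i1, hi1, hX1⟩ := hact i0
  have e0 : ∀ l m, l ≠ i0 → m ≠ i0 → p l = p m := fun l m hl hm =>
    h.uniq (hC _ _ l hi0 hl) (hC _ _ m hi0 hm) hX0
  have e1 : ∀ l m, l ≠ i1 → m ≠ i1 → p l = p m := fun l m hl hm =>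
    h.uniq (hC _ _ l hi1 hl) (hC _ _ m hi1 hm) hX1
  obtain ⟨c, hc0, hc1, _⟩ := ex4 hn i0 i1 i1
  have e : ∀ l, p l = p c := by
    intro l
    by_cases hl : l = i0
    · rw [hl]; exact e1 _ _ hi1.symm hc1.symm
    · exact e0 _ _ hl hc0.symm
  apply h.good_of_gen (q := p c)
  · intro i j hij
    rw [← e j]; exact hC i j j hij hij.symm
  · intro i j k hij hik _
    rw [← e j]; exact hM i j k j hij hik hij.symm

theorem goodT (h : Coc X t) (hn : 4 ≤ n) {j : Fin n} (hX : X (MulAut.conj (FreeGroup.of j)) ≠ 1) :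
    h.good := by
  classical
  obtain ⟨g, hg⟩ := Rprod j (Finset.univ.filter fun k => X (MulAut.conj (FreeGroup.of k)) = 1) (by simpa using hX)
  apply h.good_conj g
  apply goodT1 _ hn
  intro k
  rw [conj_A, hg]
  split_ifs with hk
  · simp only [Finset.mem_filter, Finset.mem_univ, true_and] at hk
    rw [map_mul, h.mul _ (conjI _) _ (conjI _), hk, one_mul]; exact hX
  · simpa using hk

theorem main (h : Coc X t) (hn : 4 ≤ n) (hX : ∃ u ∈ I' n, X u ≠ 1) : h.good := by
  obtain ⟨g, i, j, hij, hg⟩ : ∃ (g : AutF n) (i j : Fin n), i ≠ j ∧ X (g * C i j * g⁻¹) ≠ 1 := by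
    by_contra! hc
    obtain ⟨u, hu, hX⟩ := hX
    apply hX
    have hC : ∀ i j, i ≠ j → X (C i j) = 1 := fun i j hij => by simpa using hc 1 i j hij
    induction hu using Subgroup.closure_induction with
    | mem x hx =>
      rcases hx with ⟨i, j, hij, rfl⟩ | ⟨i, k, j, hik, hij, hkj, rfl⟩
      · exact hC i j hij
      · have e := c4 hik hij.symm hkj.symm
        have e2 : M i k j * C i j = R i k * C i j * (R i k)⁻¹ := by rw [e]; group
        have e3 := congrArg X e2
        rw [hc _ _ _ hij, h.mul _ (M_mem hik hij) _ (C_mem hij), hC i j hij, mul_one] at e3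
        exact e3
    | one => exact h.one
    | mul x y hx hy ihx ihy =>
      rw [h.mul x hx y hy]
      by_cases h1 : X x = 1
      · by_cases h2 : X y = 1
        · rw [h1, h2, one_mul]
        · exact absurd (ihy h2) h2
      · exact absurd (ihx h1) h1
    | inv x hx ihx =>
      have := h.inv_ne hx
      by_cases h1 : X x = 1
      · rwa [h1, one_mul] at this
      · exact absurd (ihx h1) h1
  by_cases hT : ∃ (g : AutF n) (j : Fin n), X (g * MulAut.conj (FreeGroup.of j) * g⁻¹) ≠ 1
  · obtain ⟨g, j, hgj⟩ := hT
    exact h.good_conj g ((h.conj g).goodT hn hgj)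
  push Not at hT
  have hT1 := hT g j
  obtain ⟨k, hki, hkj, hXk⟩ : ∃ k, k ≠ i ∧ k ≠ j ∧ X (g * C k j * g⁻¹) ≠ 1 := by
    by_contra! hc
    have h1 := ((h.conj g).prodA j).2
    have h2 := (h.conj g).XA_inv (FreeGroup.of j)
    rw [h1, hT1, one_mul, Finset.prod_eq_single i] at h2
    · exact hg h2
    · intro b hb hbi; exact hc b hbi (Finset.ne_of_mem_erase hb)
    · intro hi; simp [hij] at hi
  apply h.good_conj g
  by_cases hji : X (g * C j i * g⁻¹) = 1
  · apply (h.conj g).good_conj (R i j)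
    refine good3 _ hn hij hki.symm hkj.symm ?_ ?_ ?_
    · rw [c3 hij, mul_inv_cancel_right]; exact hg
    · rw [c5 hij, mul_inv_cancel_right, (h.conj g).mul _ (C_mem hij) _ (C_mem hij.symm), hji, mul_one]; exact hg
    · rw [c1b hij hki hkj, mul_inv_cancel_right]; exact hXk
  · exact good3 (h.conj g) hn hij hki.symm hkj.symm hg hji hXk

end Coc
end EH

set_option linter.all false
set_option linter.unusedSimpArgs false
namespace EH

section Steinberg

structure St {n : ℕ} {A : Type} [CommRing A] {G : Type} [Group G] (x : Fin n → Fin n → A → G) : Prop where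
  add : ∀ i j, i ≠ j → ∀ a b, x i j (a + b) = x i j a * x i j b
  tri : ∀ i j k, i ≠ j → j ≠ k → i ≠ k → ∀ a b, x i j a * x j k b = x i k (a * b) * x j k b * x i j a
  com : ∀ i j k l, i ≠ j → k ≠ l → j ≠ k → i ≠ l → ∀ a b, x i j a * x k l b = x k l b * x i j a

def gens {n : ℕ} {A : Type} {G : Type} (x : Fin n → Fin n → A → G) : Set G :=
  {g | ∃ i j a, i ≠ j ∧ g = x i j a}

def StFin (n : ℕ) (A : Type) [CommRing A] : Prop :=
  ∀ (G : Type) [Group G] (x : Fin n → Fin n → A → G), St x → Finite (Subgroup.closure (gens x))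

variable {n : ℕ} {A : Type} [CommRing A] {G : Type} [Group G] {x : Fin n → Fin n → A → G}

namespace St

theorem zero (h : St x) {i j : Fin n} (hij : i ≠ j) : x i j 0 = 1 := by
  have := h.add i j hij 0 0
  simpa using this

theorem neg (h : St x) {i j : Fin n} (hij : i ≠ j) (a : A) : x i j (-a) = (x i j a)⁻¹ := by
  rw [eq_inv_iff_mul_eq_one, ← h.add i j hij, neg_add_cancel, h.zero hij]

theorem cjL (h : St x) {i j k : Fin n} (hij : i ≠ j) (hjk : j ≠ k) (hik : i ≠ k) (a b : A) :
    MulAut.conj (x i j a) (x j k b) = x i k (a * b) * x j k b := by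
  rw [MulAut.conj_apply, h.tri i j k hij hjk hik, mul_inv_cancel_right]

theorem cjR (h : St x) {i j k : Fin n} (hij : i ≠ j) (hjk : j ≠ k) (hik : i ≠ k) (a b : A) :
    MulAut.conj (x j k b) (x i j a) = x i k (-(a * b)) * x i j a := by
  have := h.tri i j k hij hjk hik a b
  rw [MulAut.conj_apply, mul_inv_eq_iff_eq_mul, mul_assoc, this, h.neg hik]
  group

theorem cjC (h : St x) {i j k l : Fin n} (hij : i ≠ j) (hkl : k ≠ l) (hjk : j ≠ k) (hil : i ≠ l)
    (a b : A) : MulAut.conj (x i j a) (x k l b) = x k l b := by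
  rw [MulAut.conj_apply, h.com i j k l hij hkl hjk hil, mul_inv_cancel_right]

theorem comm_formula (h : St x) {i j k : Fin n} (hij : i ≠ j) (hjk : j ≠ k) (hik : i ≠ k) (a b : A) :
    x i k (a * b) = x i j a * x j k b * (x i j a)⁻¹ * (x j k b)⁻¹ := by
  rw [h.tri i j k hij hjk hik a b]; group

/-- D-element, unit case -/
def D (x : Fin n → Fin n → A → G) (i l : Fin n) (a b v : A) : G :=
  x l i (-(b * v)) * x i l a * x l i b * x i l (-(a * v))

theorem D_row (h : St x) {i l k : Fin n} (hil : i ≠ l) (hki : k ≠ i) (hkl : k ≠ l) {a b v : A}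
    (hv : (1 + a * b) * v = 1) (s : A) :
    MulAut.conj (D x i l a b v) (x i k s) = x i k ((1 + a * b) * s) := by
  simp only [D, map_mul, MulAut.mul_apply]
  rw [h.cjC hil hki.symm hil.symm hki.symm, h.cjL hil.symm hki.symm hkl.symm, map_mul,
    h.cjL hil hkl.symm hki.symm, h.cjC hil hki.symm hil.symm hki.symm]
  have e1 : x i k (a * (b * s)) * x l k (b * s) * x i k s = x i k ((1 + a * b) * s) * x l k (b * s) := by
    rw [mul_assoc, h.com l k i k hkl.symm hki.symm hki hkl.symm, ← mul_assoc, ← h.add i k hki.symm]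
    congr 2; ring
  rw [e1, map_mul, h.cjL hil.symm hki.symm hkl.symm, h.cjC hil.symm hkl.symm hil hkl.symm]
  have : -(b * v) * ((1 + a * b) * s) = -(b * s) := by linear_combination (-b * s) * hv
  rw [this, h.com l k i k hkl.symm hki.symm hki hkl.symm, mul_assoc, ← h.add l k hkl.symm, neg_add_cancel,
    h.zero hkl.symm, mul_one]

theorem D_col (h : St x) {i l k : Fin n} (hil : i ≠ l) (hki : k ≠ i) (hkl : k ≠ l) {a b v : A}
    (hv : (1 + a * b) * v = 1) (s : A) :
    MulAut.conj (D x i l a b v) (x k l s) = x k l ((1 + a * b) * s) := by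
  simp only [D, map_mul, MulAut.mul_apply]
  rw [h.cjC hil hkl hkl.symm hil, h.cjR hkl hil.symm hki, map_mul,
    h.cjR hki hil hkl, h.cjC hil hkl hkl.symm hil]
  have e1 : x k l (-(-(s * b) * a)) * x k i (-(s * b)) * x k l s = x k l ((1 + a * b) * s) * x k i (-(s * b)) := by
    rw [mul_assoc, h.com k i k l hki hkl hki.symm hkl, ← mul_assoc, ← h.add k l hkl]
    congr 2; ring
  rw [e1, map_mul, h.cjR hkl hil.symm hki, h.cjC hil.symm hki hki.symm hil.symm]
  have : -((1 + a * b) * s * -(b * v)) = s * b := by linear_combination (b * s) * hv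
  rw [this, h.com k i k l hki hkl hki.symm hkl, mul_assoc, ← h.add k i hki, add_neg_cancel,
    h.zero hki, mul_one]

def W (x : Fin n → Fin n → A → G) (i l : Fin n) (b c : A) : G := x i l (-c) * x l i b * x i l (-c)

theorem W_row (h : St x) {i l k : Fin n} (hil : i ≠ l) (hki : k ≠ i) (hkl : k ≠ l) {b c : A}
    (hc : b * c = 1) (s : A) : MulAut.conj (W x i l b c) (x i k s) = x l k (b * s) := by
  simp only [W, map_mul, MulAut.mul_apply]
  rw [h.cjC hil hki.symm hil.symm hki.symm, h.cjL hil.symm hki.symm hkl.symm, map_mul,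
    h.cjL hil hkl.symm hki.symm, h.cjC hil hki.symm hil.symm hki.symm]
  have : -c * (b * s) = -s := by linear_combination (-s) * hc
  rw [this, h.com i k l k hki.symm hkl.symm hkl hki.symm, mul_assoc, ← h.add i k hki.symm,
    neg_add_cancel, h.zero hki.symm, mul_one]

theorem W_col (h : St x) {i l k : Fin n} (hil : i ≠ l) (hki : k ≠ i) (hkl : k ≠ l) {b c : A}
    (hc : b * c = 1) (s : A) : MulAut.conj (W x i l b c) (x k l s) = x k i (-(s * b)) := by
  simp only [W, map_mul, MulAut.mul_apply]
  rw [h.cjC hil hkl hkl.symm hil, h.cjR hkl hil.symm hki, map_mul,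
    h.cjR hki hil hkl, h.cjC hil hkl hkl.symm hil]
  have : -(-(s * b) * -c) = -s := by linear_combination (-s) * hc
  rw [this, h.com k l k i hkl hki hkl.symm hki, mul_assoc, ← h.add k l hkl,
    neg_add_cancel, h.zero hkl, mul_one]

def Vs (x : Fin n → Fin n → A → G) (i : Fin n) : Subgroup G :=
  Subgroup.closure {g | ∃ j a, j ≠ i ∧ g = x j i a}
def Hs (x : Fin n → Fin n → A → G) (i : Fin n) : Subgroup G :=
  Subgroup.closure {g | ∃ j a, i ≠ j ∧ g = x i j a}
def Ps (x : Fin n → Fin n → A → G) (i : Fin n) : Subgroup G :=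
  Subgroup.closure {g | ∃ k l a, k ≠ l ∧ k ≠ i ∧ g = x k l a}
def Qs (x : Fin n → Fin n → A → G) (i l : Fin n) : Subgroup G :=
  Subgroup.closure {g | ∃ j k a, j ≠ k ∧ j ≠ i ∧ j ≠ l ∧ g = x j k a}

def Om (x : Fin n → Fin n → A → G) (i : Fin n) : Set G :=
  {g | ∃ v ∈ Vs x i, ∃ h ∈ Hs x i, g = MulAut.conj v h}

theorem V_mem {i j : Fin n} (hij : j ≠ i) (a : A) : x j i a ∈ Vs x i :=
  Subgroup.subset_closure ⟨j, a, hij, rfl⟩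
theorem H_mem {i j : Fin n} (hij : i ≠ j) (a : A) : x i j a ∈ Hs x i :=
  Subgroup.subset_closure ⟨j, a, hij, rfl⟩

theorem conj_le {S : Set G} {K : Subgroup G} {g : G} (h : ∀ s ∈ S, MulAut.conj g s ∈ K) :
    ∀ s ∈ Subgroup.closure S, MulAut.conj g s ∈ K := by
  have : Subgroup.closure S ≤ K.comap (MulAut.conj g).toMonoidHom := by
    rw [Subgroup.closure_le]; exact h
  exact this

theorem par1 (h : St x) {i k l : Fin n} (hkl : k ≠ l) (hki : k ≠ i) (a : A) {w : G} (hw : w ∈ Om x i) :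
    MulAut.conj (x k l a) w ∈ Om x i := by
  obtain ⟨v, hv, y, hy, rfl⟩ := hw
  by_cases hli : l = i
  · subst hli
    exact ⟨x k l a * v, mul_mem (V_mem hki a) hv, y, hy, by rw [map_mul]; rfl⟩
  have hV : MulAut.conj (x k l a) v ∈ Vs x i := by
    refine conj_le ?_ v hv
    rintro _ ⟨j, b, hj, rfl⟩
    by_cases hlj : l = j
    · subst hlj
      rw [h.cjL hkl hj hki]; exact mul_mem (V_mem hki _) (V_mem hj _)
    · rw [h.cjC hkl hj hlj hki]; exact V_mem hj _
  have hH : MulAut.conj (x k l a) y ∈ Hs x i := by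
    refine conj_le ?_ y hy
    rintro _ ⟨j, b, hj, rfl⟩
    by_cases hlj : k = j
    · subst hlj
      rw [h.cjR hki.symm hkl (Ne.symm hli)]; exact mul_mem (H_mem (Ne.symm hli) _) (H_mem hj _)
    · rw [h.cjC hkl hj hli hlj]; exact H_mem hj _
  refine ⟨_, hV, _, hH, ?_⟩
  simp [mul_assoc]

theorem par (h : St x) {i : Fin n} {p : G} (hp : p ∈ Ps x i) :
    ∀ w ∈ Om x i, MulAut.conj p w ∈ Om x i := by
  induction hp using Subgroup.closure_induction'' with
  | mem g hg => obtain ⟨k, l, a, hkl, hki, rfl⟩ := hg; intro w hw; exact h.par1 hkl hki a hw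
  | inv_mem g hg =>
    obtain ⟨k, l, a, hkl, hki, rfl⟩ := hg; intro w hw
    rw [← h.neg hkl]; exact h.par1 hkl hki _ hw
  | one => simp
  | mul p q _ _ hp hq =>
    intro w hw
    rw [map_mul]; exact hp _ (hq _ hw)

theorem Q_le_P1 {i l : Fin n} : Qs x i l ≤ Ps x i := by
  apply Subgroup.closure_mono
  rintro _ ⟨j, k, a, hjk, hji, hjl, rfl⟩
  exact ⟨j, k, a, hjk, hji, rfl⟩
theorem Q_le_P2 {i l : Fin n} : Qs x i l ≤ Ps x l := by
  apply Subgroup.closure_mono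
  rintro _ ⟨j, k, a, hjk, hji, hjl, rfl⟩
  exact ⟨j, k, a, hjk, hjl, rfl⟩

theorem Q_conj (h : St x) {i l : Fin n} (hil : i ≠ l) (a : A) :
    ∀ q ∈ Qs x i l, MulAut.conj (x i l a) q ∈ Qs x i l := by
  apply conj_le
  rintro _ ⟨j, k, b, hjk, hji, hjl, rfl⟩
  by_cases hki : k = i
  · subst hki
    rw [h.cjR hjk hil hjl]
    exact mul_mem (Subgroup.subset_closure ⟨j, l, _, hjl, hji, hjl, rfl⟩)
      (Subgroup.subset_closure ⟨j, k, _, hjk, hji, hjl, rfl⟩)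
  · rw [h.cjC hil hjk hjl.symm (Ne.symm hki)]
    exact (Subgroup.subset_closure ⟨j, k, _, hjk, hji, hjl, rfl⟩)

theorem V_comm (h : St x) {i j : Fin n} (hji : j ≠ i) (a : A) {v : G} (hv : v ∈ Vs x i) :
    Commute (x j i a) v := by
  have : Vs x i ≤ Subgroup.centralizer {x j i a} := by
    rw [Vs, Subgroup.closure_le]
    rintro _ ⟨k, b, hk, rfl⟩
    rw [SetLike.mem_coe, Subgroup.mem_centralizer_singleton_iff]
    exact h.com k i j i hk hji hji.symm hk b a
  exact ((Subgroup.mem_centralizer_singleton_iff).1 (this hv)).symm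

theorem H_comm (h : St x) {i j : Fin n} (hij : i ≠ j) (a : A) {v : G} (hv : v ∈ Hs x i) :
    Commute (x i j a) v := by
  have : Hs x i ≤ Subgroup.centralizer {x i j a} := by
    rw [Hs, Subgroup.closure_le]
    rintro _ ⟨k, b, hk, rfl⟩
    rw [SetLike.mem_coe, Subgroup.mem_centralizer_singleton_iff]
    exact h.com i k i j hk hij hk.symm hij b a
  exact ((Subgroup.mem_centralizer_singleton_iff).1 (this hv)).symm

theorem V_dec (h : St x) {i l : Fin n} (hli : l ≠ i) {v : G} (hv : v ∈ Vs x i) :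
    ∃ q ∈ Qs x i l, ∃ b, v = q * x l i b := by
  suffices ∃ q ∈ Qs x i l ⊓ Vs x i, ∃ b, v = q * x l i b by
    obtain ⟨q, hq, b, e⟩ := this; exact ⟨q, hq.1, b, e⟩
  induction hv using Subgroup.closure_induction with
  | mem g hg =>
    obtain ⟨j, a, hj, rfl⟩ := hg
    by_cases hjl : j = l
    · subst hjl; exact ⟨1, one_mem _, a, by simp⟩
    · exact ⟨x j i a, ⟨Subgroup.subset_closure ⟨j, i, a, hj, hj, hjl, rfl⟩, V_mem hj a⟩, 0, by
        rw [h.zero hli, mul_one]⟩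
  | one => exact ⟨1, one_mem _, 0, by rw [h.zero hli, mul_one]⟩
  | mul p q _ _ hp hq =>
    obtain ⟨q1, h1, b1, rfl⟩ := hp
    obtain ⟨q2, h2, b2, rfl⟩ := hq
    refine ⟨q1 * q2, mul_mem h1 h2, b1 + b2, ?_⟩
    have := (h.V_comm hli b1 h2.2).eq
    rw [h.add l i hli, mul_assoc, ← mul_assoc (x l i b1), this]; simp only [mul_assoc]
  | inv p _ hp =>
    obtain ⟨q1, h1, b1, rfl⟩ := hp
    refine ⟨q1⁻¹, inv_mem h1, -b1, ?_⟩
    rw [h.neg hli, ← mul_inv_rev, (h.V_comm hli b1 h1.2).eq]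

theorem conj_mul (g k w : G) : MulAut.conj (g * k) w = MulAut.conj g (MulAut.conj k w) := by
  rw [map_mul]; rfl

theorem Om_conj (h : St x) (hn : 3 ≤ n) (hloc : ∀ a : A, IsUnit a ∨ IsUnit (1 + a)) {i k l : Fin n} (hkl : k ≠ l) (a : A)
    {w : G} (hw : w ∈ Om x i) : ∃ j, MulAut.conj (x k l a) w ∈ Om x j := by
  by_cases hki : k = i
  swap
  · exact ⟨i, h.par1 hkl hki a hw⟩
  subst hki
  obtain ⟨v, hv, y, hy, rfl⟩ := hw
  obtain ⟨q, hq, b, rfl⟩ := h.V_dec hkl.symm hv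
  have e : MulAut.conj (x k l a) (MulAut.conj (q * x l k b) y) =
      MulAut.conj (MulAut.conj (x k l a) q) (MulAut.conj (x k l a * x l k b) y) := by
    rw [← conj_mul, ← conj_mul]; congr 2; rw [MulAut.conj_apply]; group
  rw [e]
  have hq' := h.Q_conj hkl a q hq
  obtain ⟨m, hmk, hml⟩ : ∃ m, m ≠ k ∧ m ≠ l := by
    by_contra! hc
    have : (Finset.univ : Finset (Fin n)) ⊆ {k, l} := by
      intro m _
      by_cases h1 : m = k
      · simp [h1]
      · simp [hc m h1]
    have := Finset.card_le_card this
    have h3 : ({k, l} : Finset (Fin n)).card ≤ 2 := Finset.card_le_two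
    simp at this; omega
  by_cases hu : IsUnit (1 + a * b)
  · refine ⟨k, h.par (Q_le_P1 hq') _ ?_⟩
    obtain ⟨v, hvv⟩ := hu.exists_right_inv
    have e2 : x k l a * x l k b = x l k (b * v) * (D x k l a b v * x k l (a * v)) := by
      rw [D, h.neg hkl.symm, h.neg hkl]; group
    rw [e2, conj_mul, conj_mul]
    refine ⟨_, V_mem hkl.symm _, _, ?_, rfl⟩
    have e3 : MulAut.conj (x k l (a * v)) y = y := by
      rw [MulAut.conj_apply, (h.H_comm hkl (a * v) hy).eq, mul_inv_cancel_right]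
    rw [e3]
    refine conj_le ?_ y hy
    rintro _ ⟨j, s, hj, rfl⟩
    by_cases hjl : j = l
    · subst hjl
      rw [← mul_one s, h.comm_formula hmk.symm hml hkl]
      rw [map_mul, map_mul, map_mul, map_inv, map_inv, h.D_row hkl hmk hml hvv, h.D_col hkl hmk hml hvv,
        ← h.comm_formula hmk.symm hml hkl]
      exact H_mem hj _
    · rw [h.D_row hkl hj.symm hjl hvv]; exact H_mem hj _
  · have hb : IsUnit b := by
      rcases hloc (a * b) with h1 | h1
      · exact isUnit_of_mul_isUnit_right h1
      · exact absurd h1 hu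
    obtain ⟨c, hc⟩ := hb.exists_right_inv
    refine ⟨l, h.par (Q_le_P2 hq') _ ?_⟩
    have e2 : x k l a * x l k b = x k l a * x k l c * (W x k l b c * x k l c) := by
      rw [W, h.neg hkl]; group
    rw [e2, conj_mul (x k l a * x k l c), conj_mul (W x k l b c)]
    refine ⟨_, mul_mem (V_mem hkl _) (V_mem hkl _), _, ?_, rfl⟩
    have e3 : MulAut.conj (x k l c) y = y := by
      rw [MulAut.conj_apply, (h.H_comm hkl c hy).eq, mul_inv_cancel_right]
    rw [e3]
    refine conj_le ?_ y hy
    rintro _ ⟨j, s, hj, rfl⟩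
    by_cases hjl : j = l
    · subst hjl
      rw [← mul_one s, h.comm_formula hmk.symm hml hkl]
      rw [map_mul, map_mul, map_mul, map_inv, map_inv, h.W_row hkl hmk hml hc, h.W_col hkl hmk hml hc,
        ← h.comm_formula hml.symm hmk hkl.symm]
      exact H_mem hkl.symm _
    · rw [h.W_row hkl hj.symm hjl hc]; exact H_mem (Ne.symm hjl) _

theorem fin_closure {S : Set G} (hS : S.Finite) (hc : ∀ a ∈ S, ∀ b ∈ S, a * b = b * a)
    (ht : ∀ a ∈ S, IsOfFinOrder a) : Finite (Subgroup.closure S) := by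
  letI : CommGroup (Subgroup.closure S) := Subgroup.closureCommGroupOfComm hc
  have hfg : Group.FG (Subgroup.closure S) := (Group.fg_iff_subgroup_fg _).2 ⟨hS.toFinset, by simp⟩
  apply CommGroup.finite_of_fg_isMulTorsion
  rintro ⟨g, hg⟩
  rw [← Submonoid.isOfFinOrder_coe (H := (Subgroup.closure S).toSubmonoid)]
  show IsOfFinOrder g
  have key : ∀ y ∈ Subgroup.closure S, ∀ z ∈ Subgroup.closure S, y * z = z * y := by
    intro y hy z hz
    have : (⟨y, hy⟩ * ⟨z, hz⟩ : Subgroup.closure S) = ⟨z, hz⟩ * ⟨y, hy⟩ := mul_comm _ _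
    exact congrArg Subtype.val this
  induction hg using Subgroup.closure_induction with
  | mem g hg => exact ht g hg
  | one => exact IsOfFinOrder.one
  | mul y z hy hz iy iz => exact Commute.isOfFinOrder_mul (key y hy z hz) iy iz
  | inv y _ iy => exact iy.inv

theorem x_tors [Finite A] (h : St x) {i j : Fin n} (hij : i ≠ j) (a : A) : IsOfFinOrder (x i j a) := by
  let f : Multiplicative A →* G :=
    { toFun := fun a => x i j a.toAdd, map_one' := h.zero hij, map_mul' := fun a b => h.add i j hij _ _ }
  exact f.isOfFinOrder (isOfFinOrder_of_finite (Multiplicative.ofAdd a))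

theorem V_fin [Finite A] (h : St x) (i : Fin n) : Finite (Vs x i) := by
  apply fin_closure
  · apply (Set.finite_range fun p : Fin n × A => x p.1 i p.2).subset
    rintro _ ⟨j, a, _, rfl⟩
    exact ⟨(j, a), rfl⟩
  · rintro _ ⟨j, a, hj, rfl⟩ _ ⟨k, b, hk, rfl⟩
    exact h.com _ _ _ _ hj hk hk.symm hj _ _
  · rintro _ ⟨j, a, hj, rfl⟩; exact h.x_tors hj a

theorem H_fin [Finite A] (h : St x) (i : Fin n) : Finite (Hs x i) := by
  apply fin_closure
  · apply (Set.finite_range fun p : Fin n × A => x i p.1 p.2).subset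
    rintro _ ⟨j, a, _, rfl⟩
    exact ⟨(j, a), rfl⟩
  · rintro _ ⟨j, a, hj, rfl⟩ _ ⟨k, b, hk, rfl⟩
    exact h.com _ _ _ _ hj hk hj.symm hk _ _
  · rintro _ ⟨j, a, hj, rfl⟩; exact h.x_tors hj a

theorem Om_fin [Finite A] (h : St x) (i : Fin n) : (Om x i).Finite := by
  have := h.V_fin i
  have := h.H_fin i
  apply (Set.finite_range fun p : Vs x i × Hs x i => MulAut.conj (p.1 : G) (p.2 : G)).subset
  rintro _ ⟨v, hv, y, hy, rfl⟩
  exact ⟨(⟨v, hv⟩, ⟨y, hy⟩), rfl⟩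

theorem ex3 (hn : 3 ≤ n) (k l : Fin n) : ∃ m, m ≠ k ∧ m ≠ l := by
  by_contra! hc
  have : (Finset.univ : Finset (Fin n)) ⊆ {k, l} := by
    intro m _
    by_cases h1 : m = k
    · simp [h1]
    · simp [hc m h1]
  have := Finset.card_le_card this
  have h3 : ({k, l} : Finset (Fin n)).card ≤ 2 := Finset.card_le_two
  simp at this; omega

theorem finite_of_central {G : Type} [Group G] {T : Type} [Finite T] (f : G → T)
    (hf : ∀ a b, f a = f b → a⁻¹ * b ∈ Subgroup.center G) (hp : commutator G = ⊤) : Finite G := by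
  have : Finite (commutatorSet G) := by
    have key : ∀ a b a' b' : G, f a = f a' → f b = f b' → a * b * a⁻¹ * b⁻¹ = a' * b' * a'⁻¹ * b'⁻¹ := by
      intro a b a' b' h1 h2
      obtain ⟨z, hz⟩ : ∃ z, z = a⁻¹ * a' := ⟨_, rfl⟩
      obtain ⟨w, hw⟩ : ∃ w, w = b⁻¹ * b' := ⟨_, rfl⟩
      have hzc := hf _ _ h1
      have hwc := hf _ _ h2
      rw [← hz, Subgroup.mem_center_iff] at hzc
      rw [← hw, Subgroup.mem_center_iff] at hwc
      have ea : a' = a * z := by rw [hz]; group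
      have eb : b' = b * w := by rw [hw]; group
      have c1 : Commute z a := (hzc a).symm
      rw [ea, eb, mul_inv_rev, mul_inv_rev]
      calc a * b * a⁻¹ * b⁻¹ = a * (b * a⁻¹) * b⁻¹ := by group
        _ = a * ((b * a⁻¹) * z) * z⁻¹ * b⁻¹ := by group
        _ = a * (z * (b * a⁻¹)) * z⁻¹ * b⁻¹ := by rw [hzc]
        _ = a * (z * (b * a⁻¹ * z⁻¹ * w)) * w⁻¹ * b⁻¹ := by group
        _ = a * (z * (b * (a⁻¹ * z⁻¹ * w))) * w⁻¹ * b⁻¹ := by group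
        _ = a * (z * (b * (w * (a⁻¹ * z⁻¹)))) * w⁻¹ * b⁻¹ := by rw [hwc]
        _ = a * (z * (b * (w * (z⁻¹ * (z * (a⁻¹ * z⁻¹)))))) * w⁻¹ * b⁻¹ := by group
        _ = a * (z * (b * (w * (z⁻¹ * ((a⁻¹ * z⁻¹) * z))))) * w⁻¹ * b⁻¹ := by rw [hzc (a⁻¹ * z⁻¹)]
        _ = _ := by group
    classical
    have : Set.Finite (commutatorSet G) := by
      let s : T → G := fun t => if h : ∃ a, f a = t then h.choose else 1
      have hs : ∀ a, f (s (f a)) = f a := by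
        intro a
        have h : ∃ b, f b = f a := ⟨a, rfl⟩
        simp only [s, h, dite_true]; exact h.choose_spec
      apply (Set.finite_range fun p : T × T => s p.1 * s p.2 * (s p.1)⁻¹ * (s p.2)⁻¹).subset
      rintro _ ⟨a, b, rfl⟩
      exact ⟨(f a, f b), key _ _ _ _ (hs a) (hs b)⟩
    exact this
  have h2 : Finite (commutator G) := inferInstance
  rw [hp] at h2
  exact Finite.of_equiv _ (Subgroup.topEquiv).toEquiv

theorem finite_top [Finite A] (h : St x) (hn : 3 ≤ n) (hloc : ∀ a : A, IsUnit a ∨ IsUnit (1 + a))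
    (htop : Subgroup.closure (gens x) = ⊤) : Finite G := by
  let O : Set G := ⋃ i, Om x i
  have hO : O.Finite := Set.finite_iUnion fun i => h.Om_fin i
  have : Finite O := hO
  have hst : ∀ g : G, ∀ w ∈ O, MulAut.conj g w ∈ O := by
    intro g
    have hg : g ∈ Subgroup.closure (gens x) := by rw [htop]; trivial
    have key : ∀ k l a, k ≠ l → ∀ w ∈ O, MulAut.conj (x k l a) w ∈ O := by
      intro k l a hkl w hw
      obtain ⟨i, hi⟩ := Set.mem_iUnion.1 hw
      obtain ⟨j, hj⟩ := h.Om_conj hn hloc hkl a hi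
      exact Set.mem_iUnion.2 ⟨j, hj⟩
    induction hg using Subgroup.closure_induction'' with
    | mem g hg => obtain ⟨k, l, a, hkl, rfl⟩ := hg; exact key k l a hkl
    | inv_mem g hg =>
      obtain ⟨k, l, a, hkl, rfl⟩ := hg
      rw [← h.neg hkl]; exact key k l _ hkl
    | one => simp
    | mul p q _ _ hp hq => intro w hw; rw [map_mul]; exact hp _ (hq _ hw)
  apply finite_of_central (T := O → O) (fun g w => ⟨MulAut.conj g w, hst g w w.2⟩)
  · intro a b hab
    have hc : ∀ w ∈ O, MulAut.conj a w = MulAut.conj b w := fun w hw =>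
      congrArg Subtype.val (congrFun hab ⟨w, hw⟩)
    have hle : Subgroup.closure (gens x) ≤ Subgroup.centralizer {a⁻¹ * b} := by
      rw [Subgroup.closure_le]
      rintro _ ⟨i, j, c, hij, rfl⟩
      have h1 : x i j c ∈ O := Set.mem_iUnion.2 ⟨i, 1, one_mem _, _, H_mem hij c, by simp⟩
      have h2 := hc _ h1
      rw [SetLike.mem_coe, Subgroup.mem_centralizer_singleton_iff]
      rw [MulAut.conj_apply, MulAut.conj_apply] at h2
      have h3 : a * x i j c = b * x i j c * b⁻¹ * a := by rw [← h2]; group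
      have : x i j c = a⁻¹ * (b * x i j c * b⁻¹ * a) := by rw [← h3]; group
      calc x i j c * (a⁻¹ * b) = a⁻¹ * (b * x i j c * b⁻¹ * a) * (a⁻¹ * b) := by rw [← this]
        _ = _ := by group
    rw [Subgroup.mem_center_iff]
    intro g
    have hg : g ∈ Subgroup.closure (gens x) := by rw [htop]; trivial
    exact (Subgroup.mem_centralizer_singleton_iff).1 (hle hg)
  · rw [eq_top_iff, ← htop, Subgroup.closure_le]
    rintro _ ⟨i, j, c, hij, rfl⟩
    obtain ⟨m, hmi, hmj⟩ := ex3 hn i j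
    rw [← mul_one c, h.comm_formula hmi.symm hmj hij, ← commutatorElement_def]
    exact Subgroup.commutator_mem_commutator trivial trivial

end St

theorem stFin_local {A : Type} [CommRing A] [Finite A] (hn : 3 ≤ n)
    (hloc : ∀ a : A, IsUnit a ∨ IsUnit (1 + a)) : StFin n A := by
  intro G _ x h
  classical
  let K := Subgroup.closure (gens x)
  have hm : ∀ i j a, i ≠ j → x i j a ∈ K := fun i j a hij => Subgroup.subset_closure ⟨i, j, a, hij, rfl⟩
  let y : Fin n → Fin n → A → K := fun i j a => if hij : i ≠ j then ⟨x i j a, hm i j a hij⟩ else 1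
  have hy : ∀ i j a, i ≠ j → (y i j a : G) = x i j a := by
    intro i j a hij; simp [y, hij]
  have hSt : St y := by
    refine ⟨fun i j hij a b => ?_, fun i j k hij hjk hik a b => ?_, fun i j k l hij hkl hjk hil a b => ?_⟩
    · apply Subtype.ext; push_cast; rw [hy _ _ _ hij, hy _ _ _ hij, hy _ _ _ hij, h.add i j hij]
    · apply Subtype.ext; push_cast
      rw [hy _ _ _ hij, hy _ _ _ hjk, hy _ _ _ hik, h.tri i j k hij hjk hik]
    · apply Subtype.ext; push_cast
      rw [hy _ _ _ hij, hy _ _ _ hkl, h.com i j k l hij hkl hjk hil]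
  refine hSt.finite_top hn hloc ?_
  have : Subgroup.map K.subtype (Subgroup.closure (gens y)) = K := by
    rw [MonoidHom.map_closure]
    congr 1
    ext g
    constructor
    · rintro ⟨_, ⟨i, j, a, hij, rfl⟩, rfl⟩
      exact ⟨i, j, a, hij, hy i j a hij⟩
    · rintro ⟨i, j, a, hij, rfl⟩
      exact ⟨y i j a, ⟨i, j, a, hij, rfl⟩, hy i j a hij⟩
  apply Subgroup.map_injective K.subtype_injective
  rw [this, ← MonoidHom.range_eq_map, Subgroup.range_subtype]

theorem stFin_equiv {A B : Type} [CommRing A] [CommRing B] (e : A ≃+* B) (h : StFin n A) : StFin n B := by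
  intro G _ x hx
  have hy : St (fun i j a => x i j (e a)) := by
    refine ⟨fun i j hij a b => ?_, fun i j k hij hjk hik a b => ?_, fun i j k l hij hkl hjk hil a b => ?_⟩
    · simp only [map_add]; exact hx.add i j hij _ _
    · simp only [map_mul]; exact hx.tri i j k hij hjk hik _ _
    · exact hx.com i j k l hij hkl hjk hil _ _
  have := h G _ hy
  have e2 : gens (fun i j a => x i j (e a)) = gens x := by
    ext g; constructor
    · rintro ⟨i, j, a, hij, rfl⟩; exact ⟨i, j, e a, hij, rfl⟩
    · rintro ⟨i, j, a, hij, rfl⟩; exact ⟨i, j, e.symm a, hij, by simp⟩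
  rwa [e2] at this

theorem stFin_prod {A B : Type} [CommRing A] [CommRing B] (hn : 3 ≤ n) (hA : StFin n A) (hB : StFin n B) :
    StFin n (A × B) := by
  intro G _ x hx
  have hy : St (fun i j (a : A) => x i j (a, 0)) := by
    refine ⟨fun i j hij a b => ?_, fun i j k hij hjk hik a b => ?_, fun i j k l hij hkl hjk hil a b => ?_⟩
    · simp only [← hx.add i j hij]; simp
    · simp only [hx.tri i j k hij hjk hik]; simp
    · exact hx.com i j k l hij hkl hjk hil _ _
  have hz : St (fun i j (a : B) => x i j (0, a)) := by
    refine ⟨fun i j hij a b => ?_, fun i j k hij hjk hik a b => ?_, fun i j k l hij hkl hjk hil a b => ?_⟩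
    · simp only [← hx.add i j hij]; simp
    · simp only [hx.tri i j k hij hjk hik]; simp
    · exact hx.com i j k l hij hkl hjk hil _ _
  have f1 := hA G _ hy
  have f2 := hB G _ hz
  have cm0 : ∀ i j k l, i ≠ j → k ≠ l → ¬ (i = l ∧ j = k) → ∀ a b, Commute (x i j (a, 0)) (x k l (0, b)) := by
    intro i j k l hij hkl hn a b
    by_cases hjk : j = k
    · subst hjk
      have hil : i ≠ l := fun h => hn ⟨h, rfl⟩
      have := hx.tri i j l hij hkl hil (a, 0) (0, b)
      have e : ((a, 0) * (0, b) : A × B) = 0 := by simp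
      rw [e, hx.zero hil, one_mul] at this; exact this
    · by_cases hil : i = l
      · subst hil
        have := hx.tri k i j hkl hij (Ne.symm hjk) (0, b) (a, 0)
        have e : ((0, b) * (a, 0) : A × B) = 0 := by simp
        rw [e, hx.zero (Ne.symm hjk), one_mul] at this; exact this.symm
      · exact hx.com i j k l hij hkl hjk hil _ _
  have cm : ∀ i j k l, i ≠ j → k ≠ l → ∀ a b, Commute (x i j (a, 0)) (x k l (0, b)) := by
    intro i j k l hij hkl a b
    by_cases hc : i = l ∧ j = k
    · obtain ⟨rfl, rfl⟩ := hc
      obtain ⟨m, hmi, hmj⟩ := St.ex3 hn i j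
      have e := hx.comm_formula hmj.symm hmi hij.symm (0, b) (0, 1)
      have e0 : ((0, b) * (0, 1) : A × B) = (0, b) := by simp
      rw [e0] at e
      rw [e]
      have z1 := cm0 i j j m hij hmj.symm (fun h => hmi h.1.symm) a b
      have z2 := cm0 i j m i hij hmi (fun h => hmj h.2.symm) a 1
      exact ((z1.mul_right z2).mul_right z1.inv_right).mul_right z2.inv_right
    · exact cm0 i j k l hij hkl hc a b
  let U := Subgroup.closure (gens (fun i j (a : A) => x i j (a, 0)))
  let V := Subgroup.closure (gens (fun i j (a : B) => x i j (0, a)))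
  have hUV : ∀ u v, Commute (U.subtype u) (V.subtype v) := by
    rintro ⟨u, hu⟩ ⟨v, hv⟩
    show Commute u v
    have h1 : U ≤ Subgroup.centralizer V := by
      rw [Subgroup.closure_le]
      rintro _ ⟨i, j, a, hij, rfl⟩
      have h2 : V ≤ Subgroup.centralizer {x i j (a, 0)} := by
        rw [Subgroup.closure_le]
        rintro _ ⟨k, l, b, hkl, rfl⟩
        rw [SetLike.mem_coe, Subgroup.mem_centralizer_singleton_iff]
        exact (cm i j k l hij hkl a b).symm
      rw [SetLike.mem_coe, Subgroup.mem_centralizer_iff]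
      intro v hv
      exact (Subgroup.mem_centralizer_singleton_iff).1 (h2 hv)
    exact ((Subgroup.mem_centralizer_iff).1 (h1 hu) v hv).symm
  let f : U × V →* G := MonoidHom.noncommCoprod U.subtype V.subtype hUV
  have f3 : Finite f.range := by
    have : Finite U := f1
    have : Finite V := f2
    exact Set.finite_range f
  have hle : Subgroup.closure (gens x) ≤ f.range := by
    rw [Subgroup.closure_le]
    rintro _ ⟨i, j, ⟨a, b⟩, hij, rfl⟩
    refine ⟨(⟨x i j (a, 0), Subgroup.subset_closure ⟨i, j, a, hij, rfl⟩⟩,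
      ⟨x i j (0, b), Subgroup.subset_closure ⟨i, j, b, hij, rfl⟩⟩), ?_⟩
    show x i j (a, 0) * x i j (0, b) = _
    rw [← hx.add i j hij]; simp
  exact Finite.of_injective _ (Subgroup.inclusion_injective hle)

theorem stFin_zmod (hn : 3 ≤ n) (N : ℕ) (hN : N ≠ 0) : StFin n (ZMod N) := by
  induction N using Nat.recOnPosPrimePosCoprime with
  | prime_pow p k hp hk =>
    haveI : NeZero (p ^ k) := ⟨hN⟩
    apply stFin_local hn
    intro a
    obtain ⟨m, rfl⟩ : ∃ m : ℕ, (m : ZMod (p ^ k)) = a := ⟨a.val, by simp⟩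
    by_cases hm : p ∣ m
    · right
      have : (1 + (m : ZMod (p ^ k))) = ((1 + m : ℕ) : ZMod (p ^ k)) := by push_cast; rfl
      rw [this, ZMod.isUnit_natCast_iff_not_dvd_pow hp hk]
      intro h
      have := (Nat.dvd_add_left hm).1 h
      exact hp.one_lt.ne' (Nat.dvd_one.1 this)
    · left; rwa [ZMod.isUnit_natCast_iff_not_dvd_pow hp hk]
  | zero => exact absurd rfl hN
  | one =>
    apply stFin_local hn
    intro a; left
    exact isUnit_of_subsingleton a
  | coprime a b ha hb hab iha ihb =>
    exact stFin_equiv (ZMod.chineseRemainder hab).symm (stFin_prod hn (iha (by omega)) (ihb (by omega)))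

end Steinberg
end EH

set_option linter.all false
set_option linter.unusedSimpArgs false
namespace EH

theorem common_eig {V : Type} [AddCommGroup V] [Module ℂ V] [FiniteDimensional ℂ V] [Nontrivial V]
    {ι : Type} (f : ι → Module.End ℂ V) (hc : ∀ i j v, f i (f j v) = f j (f i v)) :
    ∃ v ≠ 0, ∀ i, ∃ c : ℂ, f i v = c • v := by
  obtain ⟨W, ⟨hW0, hWi⟩, hmin⟩ := exists_minimal_of_wellFoundedLT
    (fun W : Submodule ℂ V => W ≠ ⊥ ∧ ∀ i, ∀ v ∈ W, f i v ∈ W) ⟨⊤, top_ne_bot, by simp⟩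
  obtain ⟨v, hv, hv0⟩ := Submodule.exists_mem_ne_zero_of_ne_bot hW0
  refine ⟨v, hv0, fun i => ?_⟩
  haveI : Nontrivial W := Submodule.nontrivial_iff_ne_bot.2 hW0
  obtain ⟨c, hcc⟩ := Module.End.exists_eigenvalue ((f i).restrict (hWi i))
  obtain ⟨w, hw⟩ := hcc.exists_hasEigenvector
  have hw' : f i w = c • (w : V) := by
    have := congrArg Subtype.val hw.apply_eq_smul
    simpa using this
  refine ⟨c, ?_⟩
  have : W ≤ W ⊓ Module.End.eigenspace (f i) c := by
    apply hmin
    · refine ⟨?_, ?_⟩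
      · intro hb
        have : (w : V) ∈ W ⊓ Module.End.eigenspace (f i) c :=
          ⟨w.2, Module.End.mem_eigenspace_iff.2 hw'⟩
        rw [hb] at this
        exact hw.2 (Subtype.ext (by simpa using this))
      · rintro j u ⟨hu, hu'⟩
        refine ⟨hWi j u hu, ?_⟩
        have hu' := Module.End.mem_eigenspace_iff.1 hu'
        apply Module.End.mem_eigenspace_iff.2
        rw [hc, hu', map_smul]
    · exact inf_le_left
  exact Module.End.mem_eigenspace_iff.1 (this hv).2

section core
variable {J : Type} [Group J]

theorem exists_hom (B : Type) [CommGroup B] [Group.FG B] (g : B) (hg : ¬ IsOfFinOrder g) :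
    ∃ φ : B → ℂ, (∀ a b, φ (a * b) = φ a + φ b) ∧ φ g ≠ 0 := by
  let M := Additive B
  haveI : AddGroup.FG M := inferInstance
  haveI : Module.Finite ℤ M := Module.Finite.iff_addGroup_fg.2 inferInstance
  haveI : Module.Free ℤ (M ⧸ Submodule.torsion ℤ M) := inferInstance
  let q : M →ₗ[ℤ] (M ⧸ Submodule.torsion ℤ M) := Submodule.mkQ _
  have hq : q (Additive.ofMul g) ≠ 0 := by
    intro h
    have : Additive.ofMul g ∈ Submodule.torsion ℤ M := (Submodule.Quotient.mk_eq_zero _).1 h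
    rw [Submodule.mem_torsion_iff] at this
    obtain ⟨a, ha⟩ := this
    apply hg
    rw [isOfFinOrder_iff_zpow_eq_one]
    refine ⟨a, nonZeroDivisors.ne_zero a.2, ?_⟩
    exact ha
  let b := Module.Free.chooseBasis ℤ (M ⧸ Submodule.torsion ℤ M)
  have h2 : ∃ i, b.repr (q (Additive.ofMul g)) i ≠ 0 := by
    by_contra! hc
    apply hq
    apply b.repr.injective
    ext i
    simp [hc]
  obtain ⟨i, hi⟩ := h2
  refine ⟨fun x => ((b.repr (q (Additive.ofMul x)) i : ℤ) : ℂ), ?_, by simpa using hi⟩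
  intro x y
  simp [ofMul_mul]

theorem core {n : ℕ} (hn : 4 ≤ n) [Group.FG J] (p : I' n →* J) (hp : Function.Surjective p)
    (hcom : ∀ a ∈ commutator J, ∀ b ∈ commutator J, a * b = b * a)
    [(commutator J).FiniteIndex] : Finite J := by
  let B := commutator J
  letI : CommGroup B := { (inferInstance : Group B) with
    mul_comm := fun a b => Subtype.ext (hcom _ a.2 _ b.2) }
  haveI hfg : Group.FG B := Subgroup.fg_of_index_ne_zero (commutator J)
  by_cases htors : ∀ g : B, IsOfFinOrder g
  · haveI : Finite B := CommGroup.finite_of_fg_isMulTorsion B htors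
    have hq : Finite (J ⧸ commutator J) := inferInstance
    exact Finite.of_equiv _ (Subgroup.groupEquivQuotientProdSubgroup (s := commutator J)).symm
  exfalso
  push Not at htors
  obtain ⟨g, hg⟩ := htors
  obtain ⟨φ0, hφ0, hg0⟩ := exists_hom B g hg
  have hmem : ∀ a b : J, a * b * a⁻¹ * b⁻¹ ∈ commutator J := fun a b =>
    Subgroup.commutator_mem_commutator (Subgroup.mem_top a) (Subgroup.mem_top b)
  have hnorm : (commutator J).Normal := inferInstance
  let cj : J → B → B := fun j b => ⟨j * b * j⁻¹, hnorm.conj_mem b b.2 j⟩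
  have cj_mul : ∀ j a b, cj j (a * b) = cj j a * cj j b := by
    intro j a b; apply Subtype.ext; simp [cj]
  have cj_cj : ∀ j k b, cj j (cj k b) = cj (j * k) b := by
    intro j k b; apply Subtype.ext; simp [cj, mul_assoc]
  have cj_B : ∀ j, j ∈ commutator J → ∀ b, cj j b = b := by
    intro j hj b; apply Subtype.ext; simp [cj]
    rw [hcom j hj b b.2]; simp
  have cj_comm : ∀ j k b, cj j (cj k b) = cj k (cj j b) := by
    intro j k b
    rw [cj_cj, cj_cj, show j * k = (j * k * j⁻¹ * k⁻¹) * (k * j) by group, ← cj_cj, cj_B _ (hmem j k)]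
  let V : Submodule ℂ (B → ℂ) :=
    { carrier := {φ | ∀ a b, φ (a * b) = φ a + φ b}
      zero_mem' := by intro a b; simp
      add_mem' := by intro x y hx hy a b; simp [hx a b, hy a b]; ring
      smul_mem' := by intro c x hx a b; simp [hx a b]; ring }
  have V_one : ∀ φ ∈ V, φ 1 = 0 := by
    intro φ h; have := h 1 1; rw [mul_one] at this; simpa using this
  have V_inv : ∀ φ ∈ V, ∀ a, φ a⁻¹ = - φ a := by
    intro φ h a; have := h a a⁻¹; rw [mul_inv_cancel, V_one φ h] at this; linear_combination -this
  obtain ⟨S, hS⟩ := hfg.1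
  haveI : FiniteDimensional ℂ V := by
    let ev : V →ₗ[ℂ] (S → ℂ) := (LinearMap.funLeft ℂ ℂ (fun s : S => (s : B))).comp V.subtype
    apply FiniteDimensional.of_injective ev
    rw [injective_iff_map_eq_zero]
    intro φ h
    apply Subtype.ext; funext b
    have hb : b ∈ Subgroup.closure (S : Set B) := by rw [hS]; trivial
    show (φ : B → ℂ) b = 0
    induction hb using Subgroup.closure_induction with
    | mem x hx => exact congrFun h ⟨x, hx⟩
    | one => exact V_one _ φ.2
    | mul x y _ _ h1 h2 => rw [φ.2 x y, h1, h2, add_zero]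
    | inv x _ h1 => rw [V_inv _ φ.2, h1, neg_zero]
  haveI : Nontrivial V := ⟨⟨⟨φ0, hφ0⟩, 0, fun h => hg0 (congrFun (congrArg Subtype.val h) g)⟩⟩
  let T : J → Module.End ℂ V := fun j => (LinearMap.funLeft ℂ ℂ (cj j)).restrict (by
    intro φ h a b
    simp only [LinearMap.funLeft_apply]
    rw [cj_mul, h])
  obtain ⟨φ, hφ, hχ⟩ := common_eig T (by
    intro j k v
    apply Subtype.ext; funext b
    show (v : B → ℂ) (cj k (cj j b)) = (v : B → ℂ) (cj j (cj k b))
    rw [cj_comm])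
  choose χ hχ using hχ
  have key : ∀ j b, (φ : B → ℂ) (cj j b) = χ j * (φ : B → ℂ) b := fun j b =>
    congrFun (congrArg Subtype.val (hχ j)) b
  obtain ⟨φ, hφV⟩ := φ
  simp only at key
  obtain ⟨b0, hb0⟩ : ∃ b, φ b ≠ 0 := by
    by_contra! hc
    exact hφ (Subtype.ext (funext hc))
  have χ_mul : ∀ j k, χ (j * k) = χ j * χ k := by
    intro j k
    apply mul_right_cancel₀ hb0
    rw [← key, ← cj_cj, key, key, mul_assoc]
  have χ_B : ∀ j, j ∈ commutator J → χ j = 1 := by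
    intro j hj
    apply mul_right_cancel₀ hb0
    rw [← key, cj_B j hj, one_mul]
  let t : J → J → ℂ := fun b a => φ ⟨a * b * a⁻¹ * b⁻¹, hmem a b⟩
  have t_mul : ∀ b a a', t b (a * a') = t b a + χ a * t b a' := by
    intro b a a'
    show φ _ = φ _ + χ a * φ _
    rw [← key, ← hφV, mul_comm]
    congr 1
    apply Subtype.ext
    simp [cj, mul_assoc]
  have t_B : ∀ b (a : B), t b a = (1 - χ b) * φ a := by
    intro b a
    have : t b a = φ (a * cj b a⁻¹) := by
      show φ _ = φ _
      congr 1
      apply Subtype.ext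
      simp [cj, mul_assoc]
    rw [this, hφV, key, V_inv _ hφV]; ring
  by_cases h1 : ∀ j, χ j = 1
  · have t0 : ∀ b a, t b a = 0 := by
      intro b a
      have hpow : ∀ m : ℕ, t b (a ^ m) = m * t b a := by
        intro m
        induction m with
        | zero =>
          have := t_mul b 1 1
          simp [h1] at this ⊢
          exact this
        | succ m ih => rw [pow_succ, t_mul, ih, h1]; push_cast; ring
      obtain ⟨m, hm, _, hm2⟩ := Subgroup.exists_pow_mem_of_index_ne_zero
        (H := commutator J) Subgroup.FiniteIndex.index_ne_zero a
      have := hpow m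
      rw [t_B b ⟨a ^ m, hm2⟩, h1] at this
      simp at this
      rcases this with h | h
      · omega
      · exact h
    apply hb0
    obtain ⟨b, hb⟩ := b0
    have hb' : b ∈ commutator J := hb
    rw [commutator_eq_closure] at hb'
    have : ∀ h : b ∈ commutator J, φ ⟨b, h⟩ = 0 := by
      clear hb hb0
      induction hb' using Subgroup.closure_induction with
      | mem x hx =>
        obtain ⟨c, d, rfl⟩ := hx
        intro h
        exact t0 d c
      | one => intro h; exact V_one _ hφV
      | mul x y hx hy h1 h2 =>
        rw [← commutator_eq_closure] at hx hy
        intro h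
        have := hφV ⟨x, hx⟩ ⟨y, hy⟩
        rw [h1 hx, h2 hy, add_zero] at this
        exact this
      | inv x hx h1 =>
        rw [← commutator_eq_closure] at hx
        intro h
        have := V_inv _ hφV ⟨x, hx⟩
        rw [h1 hx, neg_zero] at this
        exact this
    exact this hb
  · push Not at h1
    obtain ⟨j0, hj0⟩ := h1
    classical
    let X' : AutF n → ℂ := fun a => if h : a ∈ I' n then χ (p ⟨a, h⟩) else 1
    let t' : AutF n → ℂ := fun a => if h : a ∈ I' n then t j0 (p ⟨a, h⟩) else 0
    have X'_eq : ∀ a : I' n, X' a = χ (p a) := fun a => by simp [X', a.2]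
    have t'_eq : ∀ a : I' n, t' a = t j0 (p a) := fun a => by simp [t', a.2]
    have hC : Coc X' t' := by
      refine ⟨?_, ?_, ?_⟩
      · rw [show (1 : AutF n) = ((1 : I' n) : AutF n) from rfl, X'_eq, map_one, χ_B 1 (one_mem _)]
      · intro a ha b hb
        have := X'_eq (⟨a, ha⟩ * ⟨b, hb⟩)
        rw [map_mul, χ_mul, ← X'_eq, ← X'_eq] at this
        exact this
      · intro a ha b hb
        have := t'_eq (⟨a, ha⟩ * ⟨b, hb⟩)
        rw [map_mul, t_mul, ← X'_eq, ← t'_eq, ← t'_eq] at this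
        exact this
    obtain ⟨u0, hu0⟩ := hp j0
    obtain ⟨q, hq⟩ := hC.main hn ⟨u0, u0.2, by rw [X'_eq, hu0]; exact hj0⟩
    obtain ⟨u1, hu1⟩ := hp b0
    have h3 := (hq u1.2).2
    rw [X'_eq, t'_eq, hu1, χ_B _ b0.2, t_B] at h3
    have : 1 - χ j0 ≠ 0 := sub_ne_zero.2 (Ne.symm hj0)
    simp [this, hb0] at h3

end core
end EH

set_option linter.all false
set_option linter.unusedSimpArgs false
namespace EH
open scoped commutatorElement
variable {n : ℕ}

theorem MG_finite (n : ℕ) : (MG n).Finite := by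
  apply ((Set.finite_range fun p : Fin n × Fin n => C p.1 p.2).union
    (Set.finite_range fun p : Fin n × Fin n × Fin n => M p.1 p.2.1 p.2.2)).subset
  rintro g (⟨i, j, _, rfl⟩ | ⟨i, j, k, _, _, _, rfl⟩)
  · exact Or.inl ⟨(i, j), rfl⟩
  · exact Or.inr ⟨(i, j, k), rfl⟩

section tors
variable {K : Type} [Group K] (ρ : AutF n →* K) {N : ℕ}

theorem C_tors (hn : 3 ≤ n) (hcom : ∀ u ∈ I' n, ∀ v ∈ I' n, ρ u * ρ v = ρ v * ρ u)
    (hN : ∀ g h : K, Commute (g ^ N) (h ^ N)) {i j : Fin n} (hij : i ≠ j) :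
    ρ (C i j) ^ (N * N) = 1 := by
  obtain ⟨k, hki, hkj⟩ := St.ex3 hn i j
  have r1 : ρ (R k j) * ρ (C i k) = ρ (C i k) * ρ (C i j) * ρ (R k j) := by
    rw [← map_mul, c2 hkj hki.symm hij, map_mul, map_mul]
  have r2 : Commute (ρ (R k j)) (ρ (C i j)) := by
    have := congrArg ρ (c1b hkj hki.symm hij)
    rwa [map_mul, map_mul] at this
  have r3 : Commute (ρ (C i k)) (ρ (C i j)) := hcom _ (C_mem hki.symm) _ (C_mem hij)
  generalize ρ (R k j) = r at *
  generalize ρ (C i k) = c at *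
  generalize ρ (C i j) = d at *
  have s1 : ∀ m : ℕ, r ^ m * c = c * d ^ m * r ^ m := by
    intro m
    induction m with
    | zero => simp
    | succ m ih =>
      rw [pow_succ' r m, mul_assoc, ih, ← mul_assoc, ← mul_assoc, r1, mul_assoc (c * d),
        (r2.pow_right m).eq, pow_succ' d m]
      simp only [mul_assoc]
  have s2 : r ^ N * c * (r ^ N)⁻¹ = c * d ^ N := by rw [s1]; group
  have s3 : (r ^ N * c * (r ^ N)⁻¹) ^ N = c ^ N := by
    rw [conj_pow, (hN r c).eq]; group
  rw [s2, (r3.pow_right N).mul_pow, ← pow_mul] at s3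
  simpa using s3

theorem M_tors (hn : 3 ≤ n) (hcom : ∀ u ∈ I' n, ∀ v ∈ I' n, ρ u * ρ v = ρ v * ρ u)
    (hN : ∀ g h : K, Commute (g ^ N) (h ^ N)) {i j k : Fin n} (hij : i ≠ j) (hik : i ≠ k) (hjk : j ≠ k) :
    ρ (M i k j) ^ (N * N) = 1 := by
  rw [Coc.M_eq hij hik hjk, map_mul]
  have h1 : R i k * C i j * (R i k)⁻¹ ∈ I' n := (I'_normal n).conj_mem _ (C_mem hij) _
  have c : Commute (ρ (R i k * C i j * (R i k)⁻¹)) (ρ (C i j)⁻¹) :=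
    hcom _ h1 _ (inv_mem (C_mem hij))
  rw [c.mul_pow]
  have h2 := C_tors ρ hn hcom hN hij
  rw [map_inv, inv_pow, h2, map_mul, map_mul, map_inv, conj_pow, h2]
  simp

theorem map_fin (hn : 3 ≤ n) (hN0 : N ≠ 0) (hcom : ∀ u ∈ I' n, ∀ v ∈ I' n, ρ u * ρ v = ρ v * ρ u)
    (hN : ∀ g h : K, Commute (g ^ N) (h ^ N)) : Finite ((I' n).map ρ) := by
  have : (I' n).map ρ = Subgroup.closure (ρ '' MG n) := by rw [I', MonoidHom.map_closure]
  rw [this]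
  apply St.fin_closure ((MG_finite n).image ρ)
  · rintro _ ⟨u, hu, rfl⟩ _ ⟨v, hv, rfl⟩
    exact hcom u (Subgroup.subset_closure hu) v (Subgroup.subset_closure hv)
  · rintro _ ⟨u, hu, rfl⟩
    rw [isOfFinOrder_iff_pow_eq_one]
    refine ⟨N * N, Nat.mul_pos (Nat.pos_of_ne_zero hN0) (Nat.pos_of_ne_zero hN0), ?_⟩
    rcases hu with ⟨i, j, hij, rfl⟩ | ⟨i, j, k, hij, hik, hjk, rfl⟩
    · exact C_tors ρ hn hcom hN hij
    · exact M_tors ρ hn hcom hN hik hij hjk.symm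

end tors

theorem J_fin {E : Type} [Group E] (π : AutF n →* E) (hπ : Function.Surjective π) (hn : 4 ≤ n)
    {N : ℕ} (hN0 : N ≠ 0) (hN : ∀ g h : E, Commute (g ^ N) (h ^ N))
    (hB : ∀ a ∈ (⁅(I' n).map π, (I' n).map π⁆ : Subgroup E),
      ∀ b ∈ (⁅(I' n).map π, (I' n).map π⁆ : Subgroup E), a * b = b * a) :
    Finite ((I' n).map π) := by
  haveI hJn : ((I' n).map π).Normal := (I'_normal n).map π hπ
  obtain ⟨J, hJ⟩ : ∃ J, J = (I' n).map π := ⟨_, rfl⟩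
  have hJm : ∀ u ∈ I' n, π u ∈ J := fun u hu => hJ ▸ ⟨u, hu, rfl⟩
  haveI : Group.FG (I' n) := (Group.fg_iff_subgroup_fg _).2 ⟨(MG_finite n).toFinset, by simp [I']⟩
  haveI : Group.FG ((I' n).map π) := Group.fg_of_surjective (π.subgroupMap_surjective (I' n))
  have hmap : (commutator ((I' n).map π)).map ((I' n).map π).subtype =
    ⁅(I' n).map π, (I' n).map π⁆ := Subgroup.map_subtype_commutator _
  haveI : (commutator ((I' n).map π)).FiniteIndex := by
    let B := (⁅(I' n).map π, (I' n).map π⁆ : Subgroup E)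
    haveI : B.Normal := Subgroup.commutator_normal _ _
    let q : E →* E ⧸ B := QuotientGroup.mk' B
    have hf := map_fin (q.comp π) (by omega) hN0 (by
      intro u hu v hv
      have : ⁅π u, π v⁆ ∈ B := Subgroup.commutator_mem_commutator (Subgroup.mem_map_of_mem π hu) (Subgroup.mem_map_of_mem π hv)
      have h2 : q ⁅π u, π v⁆ = 1 := (QuotientGroup.eq_one_iff _).2 this
      rw [map_commutatorElement, commutatorElement_eq_one_iff_mul_comm] at h2
      exact h2) (by
      intro g h
      obtain ⟨g, rfl⟩ := QuotientGroup.mk'_surjective B g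
      obtain ⟨h, rfl⟩ := QuotientGroup.mk'_surjective B h
      rw [← map_pow, ← map_pow]
      exact (hN g h).map q)
    let f : ((I' n).map π) →* E ⧸ B := q.comp ((I' n).map π).subtype
    have hr : Finite f.range := by
      have : f.range = (I' n).map (q.comp π) := by
        rw [MonoidHom.range_eq_map, ← Subgroup.map_map, ← MonoidHom.range_eq_map, Subgroup.range_subtype,
          Subgroup.map_map]
      rw [this]; exact hf
    haveI : f.ker.FiniteIndex := Subgroup.finiteIndex_ker f
    apply Subgroup.finiteIndex_of_le (H := f.ker)
    intro x hx
    have : (x : E) ∈ B := (QuotientGroup.eq_one_iff _).1 hx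
    change (x : E) ∈ (⁅(I' n).map π, (I' n).map π⁆ : Subgroup E) at this
    rw [← hmap] at this
    obtain ⟨y, hy, hxy⟩ := this
    rwa [← Subtype.ext hxy]
  apply core hn (π.subgroupMap (I' n)) (π.subgroupMap_surjective (I' n))
  intro a ha b hb
  apply Subtype.ext
  apply hB
  · rw [← hmap]; exact ⟨a, ha, rfl⟩
  · rw [← hmap]; exact ⟨b, hb, rfl⟩

section gl
variable {K : Type} [Group K] (ρ : AutF n →* K) {N : ℕ}

theorem r_tri {i j k : Fin n} (hij : i ≠ j) (hik : i ≠ k) (hjk : j ≠ k) :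
    R j k * R i j = R i j * R i k * R j k := by
  have := hij.symm; have := hik.symm; have := hjk.symm
  apply aut_ext; intro x
  by_cases h0 : x = i
  · subst h0; simp [*, mul_assoc]
  by_cases h1 : x = j
  · subst h1; simp [*]
  simp [*]

theorem r_com {i j k l : Fin n} (hij : i ≠ j) (hkl : k ≠ l) (hik : i ≠ k) (hil : i ≠ l) (hjk : j ≠ k) :
    R i j * R k l = R k l * R i j := by
  have := hij.symm; have := hkl.symm; have := hik.symm; have := hil.symm; have := hjk.symm
  apply aut_ext; intro x
  by_cases h0 : x = i
  · subst h0; simp [*, mul_assoc]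
  by_cases h1 : x = k
  · subst h1; simp [*]
  simp [*]



theorem e_com (h1 : ∀ u ∈ I' n, ρ u = 1) {i j k l : Fin n} (hij : i ≠ j) (hkl : k ≠ l) (hil : i ≠ l) (hjk : j ≠ k) :
    Commute (ρ (R i j)) (ρ (R k l)) := by
  by_cases hik : i = k
  · subst hik
    have := h1 _ (M_mem hij hkl)
    simp only [M, map_mul, map_inv] at this
    show _ * _ = _ * _
    rw [mul_inv_eq_one, mul_inv_eq_iff_eq_mul] at this
    exact this
  · show _ * _ = _ * _
    rw [← map_mul, ← map_mul, r_com hij hkl hik hil hjk]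

theorem e_tri (h1 : ∀ u ∈ I' n, ρ u = 1) {i j k : Fin n} (hij : i ≠ j) (hik : i ≠ k) (hjk : j ≠ k) (a b : ℕ) :
    ρ (R j k) ^ a * ρ (R i j) ^ b = ρ (R i k) ^ (a * b) * ρ (R i j) ^ b * ρ (R j k) ^ a := by
  have t : ρ (R j k) * ρ (R i j) = ρ (R i j) * ρ (R i k) * ρ (R j k) := by
    rw [← map_mul, r_tri hij hik hjk, map_mul, map_mul]
  have c1 : Commute (ρ (R i j)) (ρ (R i k)) := e_com ρ h1 hij hik hik hij.symm
  have c2 : Commute (ρ (R j k)) (ρ (R i k)) := e_com ρ h1 hjk hik hjk hik.symm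
  generalize ρ (R j k) = y at *
  generalize ρ (R i j) = z at *
  generalize ρ (R i k) = w at *
  have s1 : y * z ^ b * y⁻¹ = z ^ b * w ^ b := by
    rw [← c1.mul_pow, ← conj_pow, t]; congr 1; group
  have s2 : ∀ a : ℕ, y ^ a * z ^ b * (y ^ a)⁻¹ = w ^ (a * b) * z ^ b := by
    intro a
    induction a with
    | zero => simp
    | succ a ih =>
      have : y ^ (a + 1) * z ^ b * (y ^ (a + 1))⁻¹ = y * (y ^ a * z ^ b * (y ^ a)⁻¹) * y⁻¹ := by
        rw [pow_succ']; group
      rw [this, ih]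
      have c3 := c2.pow_right (a * b)
      calc y * (w ^ (a * b) * z ^ b) * y⁻¹ = (y * w ^ (a * b)) * z ^ b * y⁻¹ := by group
        _ = w ^ (a * b) * (y * z ^ b * y⁻¹) := by rw [c3.eq]; group
        _ = w ^ (a * b) * (z ^ b * w ^ b) := by rw [s1]
        _ = w ^ (a * b) * (w ^ b * z ^ b) := by rw [(c1.pow_pow b b).eq]
        _ = _ := by rw [← mul_assoc, ← pow_add, add_mul, one_mul]
  rw [← s2]; group

theorem e_pow (h1 : ∀ u ∈ I' n, ρ u = 1) (hn : 3 ≤ n) (hN : ∀ g h : K, Commute (g ^ N) (h ^ N)) {i k : Fin n} (hik : i ≠ k) :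
    ρ (R i k) ^ (N * N) = 1 := by
  obtain ⟨j, hj, hj'⟩ := St.ex3 hn i k
  have := e_tri ρ h1 hj.symm hik hj' N N
  rw [(hN _ _).eq, mul_assoc] at this
  exact (mul_eq_right.1 this.symm)

def eS : Set K := {g | ∃ i j, i ≠ j ∧ g = ρ (R i j)}

theorem H_fin (h1 : ∀ u ∈ I' n, ρ u = 1) (hn : 3 ≤ n) (hN0 : N ≠ 0) (hN : ∀ g h : K, Commute (g ^ N) (h ^ N)) :
    Finite (Subgroup.closure (eS ρ)) := by
  haveI : NeZero (N * N) := ⟨mul_ne_zero hN0 hN0⟩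
  let x : Fin n → Fin n → ZMod (N * N) → K := fun i j a => ρ (R j i) ^ a.val
  have hp : ∀ i j, i ≠ j → ρ (R j i) ^ (N * N) = 1 := fun i j h => e_pow ρ h1 hn hN h.symm
  have hS : St x := by
    refine ⟨?_, ?_, ?_⟩
    · intro i j hij a b
      show _ ^ _ = _ ^ _ * _ ^ _
      rw [ZMod.val_add, ← pow_eq_pow_mod _ (hp i j hij), pow_add]
    · intro i j k hij hjk hik a b
      show _ ^ _ * _ ^ _ = _ ^ _ * _ ^ _ * _ ^ _
      rw [ZMod.val_mul, ← pow_eq_pow_mod _ (hp i k hik), e_tri ρ h1 hjk.symm hik.symm hij.symm]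
    · intro i j k l hij hkl hjk hil a b
      exact ((e_com ρ h1 hij.symm hkl.symm hjk hil).pow_pow _ _).eq
  haveI := stFin_zmod hn (N * N) (mul_ne_zero hN0 hN0) K x hS
  apply Finite.of_injective (Subgroup.inclusion (H := Subgroup.closure (eS ρ))
    (K := Subgroup.closure (gens x)) ?_) (Subgroup.inclusion_injective _)
  rw [Subgroup.closure_le]
  rintro _ ⟨i, j, hij, rfl⟩
  apply Subgroup.subset_closure
  refine ⟨j, i, ((1 : ℕ) : ZMod (N * N)), hij.symm, ?_⟩
  show _ = _ ^ _
  rw [ZMod.val_natCast, ← pow_eq_pow_mod _ (hp j i hij.symm), pow_one]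

theorem H_conj (h1 : ∀ u ∈ I' n, ρ u = 1) {g : AutF n} (hg : (∃ s, g = pm s) ∨ ∃ i, g = iota i) :
    ∀ x ∈ Subgroup.closure (eS ρ), ρ g * x * (ρ g)⁻¹ ∈ Subgroup.closure (eS ρ) := by
  have hm : ∀ i j, i ≠ j → ρ (R i j) ∈ Subgroup.closure (eS ρ) := fun i j h =>
    Subgroup.subset_closure ⟨i, j, h, rfl⟩
  intro x hx
  induction hx using Subgroup.closure_induction with
  | mem x hx =>
    obtain ⟨i, j, hij, rfl⟩ := hx
    rw [← map_inv, ← map_mul, ← map_mul]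
    rcases hg with ⟨s, rfl⟩ | ⟨a, rfl⟩
    · rw [pR s hij, mul_inv_cancel_right]
      exact hm _ _ (fun h => hij (s.injective h))
    · rw [iota_inv]
      by_cases hai : a = i
      · subst hai
        have e1 : iota a * R a j * iota a = (L a j)⁻¹ := by
          simp [L, mul_inv_rev, iota_inv, mul_assoc]
        have e2 : (L a j)⁻¹ = C a j * (R a j)⁻¹ := by simp [C]
        rw [e1, e2, map_mul, h1 _ (C_mem hij), one_mul, map_inv]
        exact inv_mem (hm _ _ hij)
      by_cases haj : a = j
      · subst haj
        rw [← Rinv hij, map_inv]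
        exact inv_mem (hm _ _ hij)
      · have e1 : iota a * R i j * iota a = R i j := by
          have := hij.symm
          have hai' := Ne.symm hai
          have haj' := Ne.symm haj
          apply aut_ext; intro x
          by_cases h0 : x = i
          · subst h0; simp [*]
          by_cases h1 : x = a
          · subst h1; simp [*]
          simp [*]
        rw [e1]; exact hm _ _ hij
  | one => simp
  | mul x y _ _ h1 h2 =>
    have := mul_mem h1 h2
    rwa [show ρ g * x * (ρ g)⁻¹ * (ρ g * y * (ρ g)⁻¹) = ρ g * (x * y) * (ρ g)⁻¹ by group] at this
  | inv x _ h1 =>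
    have := inv_mem h1
    rwa [show (ρ g * x * (ρ g)⁻¹)⁻¹ = ρ g * x⁻¹ * (ρ g)⁻¹ by group] at this


theorem sg_fin : {e : AutF n | ∀ i, ∃ s : Sl n, e (FreeGroup.of i) = lt s}.Finite := by
  classical
  apply Set.Finite.of_finite_image (f := fun e => fun i => e (FreeGroup.of i))
  · apply (Set.finite_range (fun f : Fin n → Sl n => fun i => lt (f i))).subset
    rintro _ ⟨e, he, rfl⟩
    choose f hf using he
    exact ⟨f, funext fun i => (hf i).symm⟩
  · intro a _ b _ h
    exact aut_ext fun k => congrFun h k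

theorem K_fin (h1 : ∀ u ∈ I' n, ρ u = 1) (hρ : Function.Surjective ρ) (hn : 3 ≤ n) (hN0 : N ≠ 0)
    (hN : ∀ g h : K, Commute (g ^ N) (h ^ N)) : Finite K := by
  let Sg := {e : AutF n | ∀ i, ∃ s : Sl n, e (FreeGroup.of i) = lt s}
  let H := Subgroup.closure (eS ρ)
  haveI : Finite H := H_fin ρ h1 hn hN0 hN
  haveI : Finite Sg := sg_fin
  have hsg : ∀ g : AutF n, ((∃ s, g = pm s) ∨ ∃ i, g = iota i) → ∀ e ∈ Sg, g * e ∈ Sg := by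
    intro g hg e he i
    obtain ⟨⟨k, b⟩, hs⟩ := he i
    have : (g * e) (FreeGroup.of i) = g (lt (k, b)) := by rw [← hs]; rfl
    rw [this]
    have key : ∃ s : Sl n, g (FreeGroup.of k) = lt s := by
      rcases hg with ⟨s, rfl⟩ | ⟨a, rfl⟩
      · exact ⟨(s k, true), by simp [lt]⟩
      · by_cases h : k = a
        · exact ⟨(a, false), by simp [lt, h]⟩
        · exact ⟨(k, true), by simp [lt, h]⟩
    obtain ⟨s, hs'⟩ := key
    cases b
    · exact ⟨ng s, by rw [lt_ng, ← hs']; simp [lt]⟩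
    · exact ⟨s, by rw [← hs']; simp [lt]⟩
  have hst : ∀ g : AutF n, ((∃ s, g = pm s) ∨ ∃ i, g = iota i) →
      ∀ y, (∃ h ∈ H, ∃ e ∈ Sg, ρ y = h * ρ e) → ∃ h ∈ H, ∃ e ∈ Sg, ρ (g * y) = h * ρ e := by
    rintro g hg y ⟨h, hh, e, he, hy⟩
    refine ⟨_, H_conj ρ h1 hg h hh, g * e, hsg g hg e he, ?_⟩
    rw [map_mul, hy, map_mul]; group
  have all : ∀ g : AutF n, ∃ h ∈ H, ∃ e ∈ Sg, ρ g = h * ρ e := by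
    intro g
    have hg : g ∈ Subgroup.closure (NG n) := by rw [nielsen]; trivial
    induction hg using Subgroup.closure_induction_left with
    | one => exact ⟨1, one_mem _, 1, fun i => ⟨(i, true), by simp [lt]⟩, by simp⟩
    | mul_left x hx y _ ih =>
      rcases hx with ⟨s, rfl⟩ | ⟨i, rfl⟩ | ⟨i, j, hij, rfl⟩
      · exact hst _ (Or.inl ⟨_, rfl⟩) _ ih
      · exact hst _ (Or.inr ⟨_, rfl⟩) _ ih
      · obtain ⟨h, hh, e, he, hy⟩ := ih
        exact ⟨_, mul_mem (Subgroup.subset_closure ⟨i, j, hij, rfl⟩) hh, e, he, by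
          rw [map_mul, hy, mul_assoc]⟩
    | inv_mul_cancel x hx y _ ih =>
      rcases hx with ⟨s, rfl⟩ | ⟨i, rfl⟩ | ⟨i, j, hij, rfl⟩
      · rw [pm_inv]; exact hst _ (Or.inl ⟨_, rfl⟩) _ ih
      · rw [iota_inv]; exact hst _ (Or.inr ⟨_, rfl⟩) _ ih
      · obtain ⟨h, hh, e, he, hy⟩ := ih
        exact ⟨_, mul_mem (inv_mem (Subgroup.subset_closure ⟨i, j, hij, rfl⟩)) hh, e, he, by
          rw [map_mul, map_inv, hy, mul_assoc]⟩
  apply Finite.of_surjective (fun p : H × Sg => (p.1 : K) * ρ p.2)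
  intro k
  obtain ⟨g, rfl⟩ := hρ k
  obtain ⟨h, hh, e, he, hg⟩ := all g
  exact ⟨(⟨h, hh⟩, ⟨e, he⟩), hg.symm⟩

end gl

theorem IA_normal (n : ℕ) : (IA n).Normal := by
  constructor
  intro e he g x
  have key : ∀ y : FreeGrp n, Abelianization.of (g y) = Abelianization.map g.toMonoidHom (Abelianization.of y) := by
    intro y; simp
  show Abelianization.of (g (e (g⁻¹ x))) = _
  rw [key, he, ← key]
  congr 1
  exact g.apply_symm_apply x

theorem main_index (hn : 4 ≤ n) (Γ : Subgroup (AutF n)) [Γ.FiniteIndex] (h : ⁅IA n, IA n⁆ ≤ Γ) :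
    (⁅Γ, Γ⁆ : Subgroup (AutF n)).FiniteIndex := by
  haveI := IA_normal n
  let G0 := Γ.normalCore
  haveI : G0.FiniteIndex := inferInstance
  have hN0 : G0.index ≠ 0 := Subgroup.FiniteIndex.index_ne_zero
  have hIA : ⁅IA n, IA n⁆ ≤ G0 := Subgroup.normal_le_normalCore.2 h
  let D := (⁅G0, G0⁆ : Subgroup (AutF n))
  haveI : D.Normal := Subgroup.commutator_normal _ _
  let π : AutF n →* AutF n ⧸ D := QuotientGroup.mk' D
  have hπ : Function.Surjective π := QuotientGroup.mk'_surjective D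
  have hc : ∀ a ∈ G0, ∀ b ∈ G0, Commute (π a) (π b) := by
    intro a ha b hb
    have : ⁅a, b⁆ ∈ D := Subgroup.commutator_mem_commutator ha hb
    have h2 : π ⁅a, b⁆ = 1 := (QuotientGroup.eq_one_iff _).2 this
    rwa [map_commutatorElement, commutatorElement_eq_one_iff_mul_comm] at h2
  have hN : ∀ g h : AutF n ⧸ D, Commute (g ^ G0.index) (h ^ G0.index) := by
    intro g h
    obtain ⟨g, rfl⟩ := hπ g
    obtain ⟨h, rfl⟩ := hπ h
    rw [← map_pow, ← map_pow]
    exact hc _ (G0.pow_index_mem g) _ (G0.pow_index_mem h)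
  have hJ : Finite ((I' n).map π) := by
    apply J_fin π hπ hn hN0 hN
    rw [← Subgroup.map_commutator]
    have : ⁅I' n, I' n⁆ ≤ G0 := (Subgroup.commutator_mono I'_le_IA I'_le_IA).trans hIA
    rintro _ ⟨a, ha, rfl⟩ _ ⟨b, hb, rfl⟩
    exact hc _ (this ha) _ (this hb)
  haveI hJn : ((I' n).map π).Normal := (I'_normal n).map π hπ
  let q : AutF n ⧸ D →* (AutF n ⧸ D) ⧸ ((I' n).map π) := QuotientGroup.mk' _
  have hq : Function.Surjective q := QuotientGroup.mk'_surjective _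
  haveI : Finite ((AutF n ⧸ D) ⧸ ((I' n).map π)) := by
    refine K_fin (q.comp π) ?_ (hq.comp hπ) (by omega) hN0 ?_
    · intro u hu
      exact (QuotientGroup.eq_one_iff _).2 ⟨u, hu, rfl⟩
    · intro g h
      obtain ⟨g, rfl⟩ := hq g
      obtain ⟨h, rfl⟩ := hq h
      rw [← map_pow, ← map_pow]
      exact (hN g h).map q
  haveI : Finite (AutF n ⧸ D) := Finite.of_subgroup_quotient ((I' n).map π)
  haveI : D.FiniteIndex := Subgroup.finiteIndex_of_finite_quotient
  exact Subgroup.finiteIndex_of_le (H := D)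
    (Subgroup.commutator_mono Γ.normalCore_le Γ.normalCore_le)

theorem final (hn : 4 ≤ n) (Γ : Subgroup (AutF n)) [Γ.FiniteIndex] (h : ⁅IA n, IA n⁆ ≤ Γ) :
    Finite (Abelianization Γ) ∧ ∀ φ : Γ →* Multiplicative ℝ, φ = 1 := by
  haveI := main_index hn Γ h
  have hmap : (commutator Γ).map Γ.subtype = ⁅Γ, Γ⁆ := Subgroup.map_subtype_commutator _
  haveI : (commutator Γ).FiniteIndex := by
    have : commutator Γ = (⁅Γ, Γ⁆ : Subgroup (AutF n)).subgroupOf Γ := by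
      rw [← hmap, Subgroup.subgroupOf, Subgroup.comap_map_eq_self_of_injective Γ.subtype_injective]
    rw [this]; infer_instance
  have hf : Finite (Γ ⧸ commutator Γ) := inferInstance
  have hf' : Finite (Abelianization Γ) := hf
  refine ⟨hf', fun φ => ?_⟩
  ext x
  obtain ⟨m, hm, hx⟩ := isOfFinOrder_iff_pow_eq_one.1 (isOfFinOrder_of_finite (Abelianization.of x))
  have h1 : φ x ^ m = 1 := by
    have := congrArg (Abelianization.lift φ) hx
    simpa using this
  have h2 : m • Multiplicative.toAdd (φ x) = 0 := by
    rw [← toAdd_pow, h1]; rfl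
  have h3 : Multiplicative.toAdd (φ x) = 0 := by
    simpa [hm.ne'] using h2
  exact h3

end EH

/-- Ershov–He.  For `n ≥ 4`, if `Γ` is a finite index subgroup of
`Aut(Fₙ)` containing `[IAₙ, IAₙ]`, then `Γ` has finite abelianization; in particular
every group homomorphism `Γ → (ℝ, +)` is trivial. -/
theorem ershov_he_contains_commutator_of_IA
    (n : ℕ) (hn : 4 ≤ n)
    (Γ : Subgroup (AutF n)) [Γ.FiniteIndex]
    (h : ⁅IA n, IA n⁆ ≤ Γ) :
    Finite (Abelianization Γ) ∧ ∀ φ : Γ →* Multiplicative ℝ, φ = 1 := by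
  exact EH.final hn Γ h
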